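/- Let r ≥ 2 and let (X_t)_{t≥0} be an ℝ^d-valued progressively measurable process with X_t ∈ L^r for all t, which is L^r-bounded, satisfies E[X_t | 𝓡₀] = 0 a.s. for all t ≥ 0, and satisfies M_r + Γ_r < ∞ a.s. Let f : [0,T] → ℝ be Borel measurable with ∫₀^T f_t² dt < ∞. Then, almost surely, E[ |∫₀^T f_t X_t dt|^r | 𝓡₀ ]^{1/r} ≤ √(r−1) (∫₀^T f_t² dt)^{1/2} [M_r + Γ_r]. -/

import Mathlib

/-!
Let `S_t = ∫₀ᵗ f_u Y_u du` for a scalar process `Y`, and `F(t) = E|S_t|^r`. The paths of `S` are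
absolutely continuous, so the chain rule applied twice (`chain_rule_integral`,
`expected_chain_bound`) gives
`F(t) ≤ r (r - 1) ∫_{0 < s ≤ t' ≤ t} |f_s| |f_{t'}| |E[|S_s|^{r-2} Y_s Y_{t'}]| ds dt'`.
The factor `|S_s|^{r-2} Y_s` is `𝓡_s`-measurable, hence, given `𝓡₀`, independent of
`𝓡⁺_{t'-τ}` for `τ = ⌊t' - s⌋`. Since `Y_{t'}` is centred given `𝓡₀`, the expectation is unchanged
when `Y_{t'}` is replaced by its residual `Y_{t'} - E[Y_{t'} | 𝓡⁺_{t'-τ} ∨ 𝓡₀]`, and Hölder's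
inequality bounds it by `F(s)^{1-2/r} m g_τ`, where `m` bounds the `L^r` norms of `Y` and `g_τ`
those of the residuals (`covariance_bound`). After symmetrization `|f_s f_{t'}| ≤ (f_s² + f_{t'}²) / 2`
the resulting integral inequality is closed by a Gronwall argument of Bihari type
(`moment_gronwall`), which yields
`F(T)^{2/r} ≤ 2 (r - 1) m (∑ g_τ) ∫₀ᵀ f²` (`core_moment`); finally `2 a b ≤ (a + b)²` replaces
`2 m ∑ g_τ` by `(m + ∑ g_τ)²`.

The conditional statement follows by localization. For `A ∈ 𝓡₀` on which the conditional moment and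
mixing terms are below constants, the unconditional inequality is applied to `1_{A'} X^i` for every
`𝓡₀`-event `A' ⊆ A` (`localized_moment`), Minkowski's inequality sums over the coordinates
(`vector_localized_moment`), and varying `A'` gives the conditional inequality on `A`
(`conditional_moment_on`). The set where all these terms are below given rational constants need not
be measurable, being an uncountable intersection over `t`; it is replaced by a hull in `𝓡₀`
(`exists_measurable_hull`), which obeys each of the bounds almost surely. There are only countably
many choices of rational constants, and letting them decrease to the suprema concludes. Only
`τ ≤ ⌊T⌋` enters, so each choice is a finite family of rationals.
-/

open MeasureTheory ProbabilityTheory Real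

section CtsMixing

variable {Ω : Type*} {m0 : MeasurableSpace Ω} {d : ℕ}

/-- The conditional `L^r` norm `E[|X_t^i|^r | 𝓡₀]^{1/r}`. -/
noncomputable def MrTermC (P : Measure Ω) (𝓡 : ℝ → MeasurableSpace Ω) (r : ℝ)
    (X : ℝ → Ω → EuclideanSpace ℝ (Fin d)) (i : Fin d) (t : ℝ) : Ω → ℝ :=
  fun ω => ((P[fun ω' => |X t ω' i| ^ r | 𝓡 0]) ω) ^ r⁻¹

/-- `M_r = Σ_i sup_{t ≥ 0} E[|X_t^i|^r | 𝓡₀]^{1/r}`. -/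
noncomputable def MrC (P : Measure Ω) (𝓡 : ℝ → MeasurableSpace Ω) (r : ℝ)
    (X : ℝ → Ω → EuclideanSpace ℝ (Fin d)) : Ω → ℝ :=
  fun ω => ∑ i : Fin d, ⨆ t : {t : ℝ // 0 ≤ t}, MrTermC P 𝓡 r X i (t : ℝ) ω

/-- The conditional mixing term
`E[|X_t^i − E[X_t^i | 𝓡⁺_{t−τ} ∨ 𝓡₀]|^r | 𝓡₀]^{1/r}`. -/
noncomputable def GrTermC (P : Measure Ω) (𝓡 𝓡p : ℝ → MeasurableSpace Ω) (r : ℝ)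
    (X : ℝ → Ω → EuclideanSpace ℝ (Fin d)) (i : Fin d) (τ : ℕ) (t : ℝ) : Ω → ℝ :=
  fun ω => ((P[fun ω' => |X t ω' i -
      (P[fun ω'' => X t ω'' i | 𝓡p (t - τ) ⊔ 𝓡 0]) ω'| ^ r | 𝓡 0]) ω) ^ r⁻¹

/-- `Γ_r = Σ_i Σ_{τ∈ℕ} sup_{t ≥ τ} E[|X_t^i − E[X_t^i | 𝓡⁺_{t−τ} ∨ 𝓡₀]|^r | 𝓡₀]^{1/r}`. -/
noncomputable def GrC (P : Measure Ω) (𝓡 𝓡p : ℝ → MeasurableSpace Ω) (r : ℝ)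
    (X : ℝ → Ω → EuclideanSpace ℝ (Fin d)) : Ω → ℝ :=
  fun ω => ∑ i : Fin d, ∑' τ : ℕ,
    ⨆ t : {t : ℝ // (τ : ℝ) ≤ t}, GrTermC P 𝓡 𝓡p r X i τ (t : ℝ) ω

end CtsMixing

section Helpers

open Set Filter Topology
open scoped ENNReal NNReal

/-! ### Chain rule for absolutely continuous paths and a nonlinear Gronwall inequality -/

/-- Fundamental theorem of calculus for `ψ ∘ S`, where `S` is the primitive of a merely integrable
function. A `C¹` function `ψ` is Lipschitz on a compact convex set containing the values of `S`, so
`ψ ∘ S` is absolutely continuous. -/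
theorem chain_rule_integral {h : ℝ → ℝ} {T : ℝ} (hT : 0 ≤ T)
    (hh : IntervalIntegrable h volume 0 T) {ψ ψ' : ℝ → ℝ} {s : Set ℝ} (hs : Convex ℝ s)
    (hc : IsCompact s) (hS : ∀ t ∈ Icc 0 T, (∫ u in (0 : ℝ)..t, h u) ∈ s)
    (hd : ∀ x ∈ s, HasDerivAt ψ (ψ' x) x) (hψ' : ContinuousOn ψ' s) :
    ∫ t in (0 : ℝ)..T, ψ' (∫ u in (0 : ℝ)..t, h u) * h t
      = ψ (∫ u in (0 : ℝ)..T, h u) - ψ 0 := by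
  set S : ℝ → ℝ := fun t => ∫ u in (0 : ℝ)..t, h u with hSdef
  have hSac : AbsolutelyContinuousOnInterval S 0 T :=
    hh.absolutelyContinuousOnInterval_intervalIntegral (c := 0) (by simp)
  obtain ⟨K, hK⟩ := hc.exists_bound_of_continuousOn hψ'
  have hlip : LipschitzOnWith K.toNNReal ψ s := by
    refine hs.lipschitzOnWith_of_nnnorm_hasDerivWithin_le
      (fun x hx => (hd x hx).hasDerivWithinAt) (fun x hx => ?_)
    rw [← NNReal.coe_le_coe, coe_nnnorm]
    exact (hK x hx).trans (Real.le_coe_toNNReal K)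
  have hac : AbsolutelyContinuousOnInterval (fun t => ψ (S t)) 0 T := by
    unfold AbsolutelyContinuousOnInterval at hSac ⊢
    have h1 := hSac.const_mul (K.toNNReal : ℝ)
    rw [mul_zero] at h1
    refine squeeze_zero' (Eventually.of_forall fun E =>
      Finset.sum_nonneg fun _ _ => dist_nonneg) ?_ h1
    refine eventually_inf_principal.2 (Eventually.of_forall fun E hE => ?_)
    rw [Finset.mul_sum]
    refine Finset.sum_le_sum fun i hi => ?_
    have hE' := hE.1 i hi
    rw [uIcc_of_le hT] at hE'
    exact hlip.dist_le_mul _ (hS _ hE'.1) _ (hS _ hE'.2)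
  have := hac.integral_deriv_eq_sub
  have hS0 : S 0 = 0 := by simp [hSdef]
  simp only [hS0] at this
  rw [← this]
  refine intervalIntegral.integral_congr_ae ?_
  filter_upwards [hh.ae_hasDerivAt_integral] with t ht htm
  have htm' := uIoc_subset_uIcc htm
  have h1 := ht htm' 0 (by simp)
  rw [uIcc_of_le hT] at htm'
  exact ((hd _ (hS t htm')).comp t h1).deriv.symm

/-- Gronwall inequality of Bihari type: `G ≤ C ∫ q G^β` implies `G^{1-β} ≤ (1 - β) C ∫ q`. With `W`
the right-hand side of the hypothesis, `(W + ε)^{1-β}` has derivative at most `(1 - β) C q`; the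
shift by `ε` keeps the power differentiable where `W` vanishes. -/
theorem nonlinear_gronwall {T : ℝ} (hT : 0 ≤ T) {q G : ℝ → ℝ} {C β : ℝ} (hβ0 : 0 ≤ β) (hβ1 : β < 1)
    (hC : 0 ≤ C) (hq0 : ∀ t, 0 ≤ q t) (hq : IntervalIntegrable q volume 0 T)
    (hG : Monotone G) (hG0 : ∀ t, 0 ≤ G t)
    (hle : ∀ t ∈ Icc 0 T, G t ≤ C * ∫ u in (0 : ℝ)..t, q u * G u ^ β) :
    G T ^ (1 - β) ≤ (1 - β) * C * ∫ u in (0 : ℝ)..T, q u := by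
  have hGm : Monotone fun u => G u ^ β := fun a b hab => rpow_le_rpow (hG0 a) (hG hab) hβ0
  have hint : IntervalIntegrable (fun u => q u * G u ^ β) volume 0 T := by
    rw [intervalIntegrable_iff, uIoc_of_le hT] at hq ⊢
    refine hq.mul_bdd (c := G T ^ β) hGm.measurable.aestronglyMeasurable ?_
    filter_upwards [ae_restrict_mem measurableSet_Ioc] with u hu
    rw [norm_of_nonneg (rpow_nonneg (hG0 u) β)]
    exact hGm hu.2
  set h : ℝ → ℝ := fun u => C * (q u * G u ^ β) with hh
  have hhint : IntervalIntegrable h volume 0 T := hint.const_mul C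
  have hh0 : ∀ u, 0 ≤ h u := fun u =>
    mul_nonneg hC (mul_nonneg (hq0 u) (rpow_nonneg (hG0 u) β))
  set W : ℝ → ℝ := fun t => ∫ u in (0 : ℝ)..t, h u with hW
  have hGW : ∀ t ∈ Icc 0 T, G t ≤ W t := fun t ht => by
    simpa [hW, hh, intervalIntegral.integral_const_mul] using hle t ht
  have hW0 : ∀ t ∈ Icc 0 T, 0 ≤ W t := fun t ht => (hG0 t).trans (hGW t ht)
  have hWT : ∀ t ∈ Icc 0 T, W t ∈ Icc 0 (W T) := fun t ht => by
    refine ⟨hW0 t ht, ?_⟩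
    exact intervalIntegral.integral_mono_interval le_rfl ht.1 ht.2
      (Eventually.of_forall hh0) hhint
  have key : ∀ ε > 0, (W T + ε) ^ (1 - β) ≤ ε ^ (1 - β) + (1 - β) * C * ∫ u in (0 : ℝ)..T, q u := by
    intro ε hε
    have hch := chain_rule_integral hT hhint (ψ := fun x => (x + ε) ^ (1 - β))
      (ψ' := fun x => (1 - β) * (x + ε) ^ (-β)) (s := Icc 0 (W T)) (convex_Icc _ _) isCompact_Icc
      hWT ?_ ?_
    · have h2 : ∫ t in (0 : ℝ)..T, (1 - β) * (W t + ε) ^ (-β) * h t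
          ≤ ∫ t in (0 : ℝ)..T, (1 - β) * C * q t := by
        refine intervalIntegral.integral_mono_on hT ?_ (hq.const_mul _) ?_
        · have hWc : ContinuousOn W (uIcc 0 T) :=
            (hhint.absolutelyContinuousOnInterval_intervalIntegral (c := 0) (by simp)).continuousOn
          refine hhint.continuousOn_mul ?_
          refine continuousOn_const.mul ((hWc.add continuousOn_const).rpow_const fun t ht => ?_)
          rw [uIcc_of_le hT] at ht
          exact Or.inl (add_pos_of_nonneg_of_pos (hW0 t ht) hε).ne'
        · intro t ht
          have hw := hW0 t ht
          have h3 : (W t + ε) ^ (-β) * G t ^ β ≤ 1 := by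
            rw [rpow_neg (by positivity), inv_mul_le_iff₀ (by positivity), mul_one]
            exact rpow_le_rpow (hG0 t) (by linarith [hGW t ht]) hβ0
          have h4 : 0 ≤ (1 - β) * C * q t :=
            mul_nonneg (mul_nonneg (by linarith) hC) (hq0 t)
          calc (1 - β) * (W t + ε) ^ (-β) * h t
              = (1 - β) * C * q t * ((W t + ε) ^ (-β) * G t ^ β) := by simp only [hh]; ring
            _ ≤ _ := mul_le_of_le_one_right h4 h3
      rw [intervalIntegral.integral_const_mul] at h2
      have h5 : (fun x => (x + ε) ^ (1 - β)) 0 = ε ^ (1 - β) := by simp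
      simp only [zero_add] at hch
      have h6 : ∫ t in (0 : ℝ)..T, (1 - β) * (W t + ε) ^ (-β) * h t
        = (W T + ε) ^ (1 - β) - ε ^ (1 - β) := hch
      linarith
    · intro x hx
      have : 0 < x + ε := by linarith [hx.1]
      have h7 := ((hasDerivAt_id x).add_const ε).rpow_const (p := 1 - β) (Or.inl this.ne')
      refine HasDerivAt.congr_deriv h7 ?_
      rw [show 1 - β - 1 = -β by ring, one_mul]
      rfl
    · refine continuousOn_const.mul ((continuousOn_id.add continuousOn_const).rpow_const
        fun x hx => Or.inl ?_)
      exact (add_pos_of_nonneg_of_pos hx.1 hε).ne'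
  have hlim : Tendsto (fun ε : ℝ => ε ^ (1 - β) + (1 - β) * C * ∫ u in (0 : ℝ)..T, q u) (𝓝[>] 0)
      (𝓝 (0 ^ (1 - β) + (1 - β) * C * ∫ u in (0 : ℝ)..T, q u)) := by
    refine Tendsto.add_const _ ?_
    exact ((continuous_rpow_const (by linarith)).tendsto 0).mono_left nhdsWithin_le_nhds
  rw [zero_rpow (by linarith), zero_add] at hlim
  refine ge_of_tendsto hlim ?_
  filter_upwards [self_mem_nhdsWithin] with ε hε
  refine le_trans (rpow_le_rpow (hG0 T) ?_ (by linarith)) (key ε hε)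
  have := hGW T ⟨hT, le_rfl⟩
  have : 0 < ε := hε
  linarith

/-! ### Quadratic integral inequalities with a convolution kernel -/

/-- The step kernel `x ↦ g ⌊x⌋` on `[0, T]` turns the integral over time lags into the sum over the
integer lags `τ ≤ ⌊T⌋`. -/
theorem kernel_integral_le (g : ℕ → ℝ≥0∞) (T : ℝ) :
    ∫⁻ x, (Icc 0 T).indicator (fun x => g ⌊x⌋₊) x ≤ ∑ τ ∈ Finset.range (⌊T⌋₊ + 1), g τ := by
  have hpt : ∀ x, (Icc 0 T).indicator (fun x => g ⌊x⌋₊) x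
      ≤ ∑ τ ∈ Finset.range (⌊T⌋₊ + 1), (Ico (τ : ℝ) (τ + 1)).indicator (fun _ => g τ) x := by
    intro x
    by_cases hx : x ∈ Icc 0 T
    · rw [indicator_of_mem hx]
      have hmem : ⌊x⌋₊ ∈ Finset.range (⌊T⌋₊ + 1) := by
        simpa [Nat.lt_succ_iff] using Nat.floor_mono hx.2
      refine le_trans ?_ (Finset.single_le_sum (fun _ _ => zero_le) hmem)
      rw [indicator_of_mem]
      exact ⟨Nat.floor_le hx.1, Nat.lt_floor_add_one x⟩
    · rw [indicator_of_notMem hx]; exact zero_le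
  refine (lintegral_mono hpt).trans ?_
  rw [lintegral_finsetSum _ (fun τ _ => measurable_const.indicator measurableSet_Ico)]
  refine Finset.sum_le_sum fun τ _ => ?_
  rw [lintegral_indicator measurableSet_Ico, lintegral_const]
  simp

/-- Closes the quadratic integral inequality for the moments. The weights are symmetrized by
`|a t' a s| ≤ (a t'² + a s²) / 2`, `F` is replaced by its running supremum, and each of the two
resulting terms is integrated in the variable its weight does not involve, which costs at most
`∫ k ≤ Γ`; then `nonlinear_gronwall` applies. -/
theorem moment_gronwall {T : ℝ} (hT : 0 ≤ T) {a : ℝ → ℝ} (ha : Measurable a)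
    (ha2 : IntegrableOn (fun t => a t ^ 2) (Icc 0 T)) {F : ℝ → ℝ≥0∞} {K Γ B : ℝ≥0∞} {β : ℝ}
    (hβ0 : 0 ≤ β) (hβ1 : β < 1) {k : ℝ → ℝ≥0∞} (hk : Measurable k) (hkΓ : ∫⁻ x, k x ≤ Γ)
    (hK : K ≠ ∞) (hΓ : Γ ≠ ∞) (hB : B ≠ ∞) (hFB : ∀ t ∈ Icc 0 T, F t ≤ B)
    (hF : ∀ t ∈ Icc 0 T, F t ≤ ∫⁻ t' in Ioc 0 t, ∫⁻ s in Ioc 0 t',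
      K * (‖a t'‖ₑ * ‖a s‖ₑ * F s ^ β * k (t' - s))) :
    (F T).toReal ^ (1 - β) ≤ (1 - β) * (K.toReal * Γ.toReal) * ∫ t in Icc 0 T, a t ^ 2 := by
  -- the running supremum is monotone, as `nonlinear_gronwall` requires, while `F` need not even be
  -- measurable
  set G : ℝ → ℝ≥0∞ := fun t => ⨆ s ∈ Icc 0 (min t T), F s with hG
  have hGm : Monotone G := fun x y hxy =>
    biSup_mono fun s hs => ⟨hs.1, hs.2.trans (min_le_min_right _ hxy)⟩
  have hGB : ∀ t, G t ≤ B := fun t =>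
    iSup₂_le fun s hs => hFB s ⟨hs.1, hs.2.trans (min_le_right _ _)⟩
  have hFG : ∀ s ∈ Icc 0 T, F s ≤ G s := fun s hs => by
    exact le_iSup₂ (f := fun u (_ : u ∈ Icc 0 (min s T)) => F u) s ⟨hs.1, le_min le_rfl hs.2⟩
  set w : ℝ → ℝ≥0∞ := fun t => ‖a t‖ₑ ^ 2 * G t ^ β with hw
  have hwm : Measurable w := (ha.enorm.pow_const 2).mul (hGm.measurable.pow_const β)
  have hamgm : ∀ t ∈ Icc 0 T, ∀ s ∈ Ioc 0 t, ‖a t‖ₑ * ‖a s‖ₑ * F s ^ β ≤ 2⁻¹ * (w t + w s) := by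
    intro t ht s hs
    have h1 : F s ^ β ≤ G s ^ β :=
      ENNReal.rpow_le_rpow (hFG s ⟨hs.1.le, hs.2.trans ht.2⟩) hβ0
    have h2 : G s ^ β ≤ G t ^ β := ENNReal.rpow_le_rpow (hGm hs.2) hβ0
    have h3 : ‖a t‖ₑ * ‖a s‖ₑ ≤ 2⁻¹ * (‖a t‖ₑ ^ 2 + ‖a s‖ₑ ^ 2) := by
      rw [← ofReal_norm, ← ofReal_norm, ← ENNReal.ofReal_mul (norm_nonneg _),
        ← ENNReal.ofReal_pow (norm_nonneg _), ← ENNReal.ofReal_pow (norm_nonneg _),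
        ← ENNReal.ofReal_add (by positivity) (by positivity),
        show (2⁻¹ : ℝ≥0∞) = ENNReal.ofReal 2⁻¹ by
          rw [ENNReal.ofReal_inv_of_pos (by norm_num)]; simp,
        ← ENNReal.ofReal_mul (by norm_num)]
      exact ENNReal.ofReal_le_ofReal (by nlinarith [sq_nonneg (‖a t‖ - ‖a s‖)])
    calc ‖a t‖ₑ * ‖a s‖ₑ * F s ^ β ≤ 2⁻¹ * (‖a t‖ₑ ^ 2 + ‖a s‖ₑ ^ 2) * G s ^ β := by gcongr
      _ = 2⁻¹ * (‖a t‖ₑ ^ 2 * G s ^ β + ‖a s‖ₑ ^ 2 * G s ^ β) := by ring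
      _ ≤ _ := by simp only [hw]; gcongr
  have hmain : ∀ t ∈ Icc 0 T, F t ≤ K * Γ * ∫⁻ u in Ioc 0 t, w u := by
    intro t ht
    have hkm : Measurable fun p : ℝ × ℝ => k (p.1 - p.2) :=
      hk.comp (measurable_fst.sub measurable_snd)
    have hfirst : ∫⁻ t' in Ioc 0 t, ∫⁻ s in Ioc 0 t', w t' * k (t' - s)
        ≤ Γ * ∫⁻ u in Ioc 0 t, w u := by
      rw [← lintegral_const_mul _ hwm]
      refine lintegral_mono fun t' => ?_
      rw [lintegral_const_mul _ (by fun_prop), mul_comm]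
      gcongr
      refine (setLIntegral_le_lintegral _ _).trans ?_
      rw [lintegral_sub_left_eq_self k]
      exact hkΓ
    have hsecond : ∫⁻ t' in Ioc 0 t, ∫⁻ s in Ioc 0 t', w s * k (t' - s)
        ≤ Γ * ∫⁻ u in Ioc 0 t, w u := by
      calc ∫⁻ t' in Ioc 0 t, ∫⁻ s in Ioc 0 t', w s * k (t' - s)
          ≤ ∫⁻ t' in Ioc 0 t, ∫⁻ s in Ioc 0 t, w s * k (t' - s) := by
            refine setLIntegral_mono' measurableSet_Ioc fun t' ht' => ?_
            exact lintegral_mono_set (Ioc_subset_Ioc_right ht'.2)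
        _ = ∫⁻ s in Ioc 0 t, ∫⁻ t' in Ioc 0 t, w s * k (t' - s) := by
            refine lintegral_lintegral_swap ?_
            exact ((hwm.comp measurable_snd).mul hkm).aemeasurable
        _ ≤ ∫⁻ s in Ioc 0 t, Γ * w s := by
            refine lintegral_mono fun s => ?_
            rw [lintegral_const_mul _ (by fun_prop), mul_comm]
            gcongr
            refine (setLIntegral_le_lintegral _ _).trans ?_
            rw [lintegral_sub_right_eq_self k]
            exact hkΓ
        _ = _ := lintegral_const_mul _ hwm
    refine (hF t ht).trans ?_
    calc ∫⁻ t' in Ioc 0 t, ∫⁻ s in Ioc 0 t', K * (‖a t'‖ₑ * ‖a s‖ₑ * F s ^ β * k (t' - s))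
        ≤ ∫⁻ t' in Ioc 0 t, ∫⁻ s in Ioc 0 t',
            (K * 2⁻¹) * (w t' * k (t' - s) + w s * k (t' - s)) := by
          refine setLIntegral_mono' measurableSet_Ioc fun t' ht' => ?_
          refine setLIntegral_mono' measurableSet_Ioc fun s hs => ?_
          rw [mul_assoc K, ← add_mul, ← mul_assoc 2⁻¹]
          refine mul_le_mul_right (mul_le_mul_left ?_ _) _
          exact hamgm t' ⟨ht'.1.le, ht'.2.trans ht.2⟩ s hs
      _ = (K * 2⁻¹) * ((∫⁻ t' in Ioc 0 t, ∫⁻ s in Ioc 0 t', w t' * k (t' - s))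
            + ∫⁻ t' in Ioc 0 t, ∫⁻ s in Ioc 0 t', w s * k (t' - s)) := by
          have e1 : ∀ t', ∫⁻ s in Ioc 0 t',
              (K * 2⁻¹) * (w t' * k (t' - s) + w s * k (t' - s))
              = (K * 2⁻¹) * ((∫⁻ s in Ioc 0 t', w t' * k (t' - s))
                + ∫⁻ s in Ioc 0 t', w s * k (t' - s)) := by
            intro t'
            have hk' : Measurable fun s => k (t' - s) := hkm.comp measurable_prodMk_left
            rw [lintegral_const_mul _ (by fun_prop), lintegral_add_left (by fun_prop)]
          simp_rw [e1]
          rw [lintegral_const_mul', lintegral_add_left]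
          · have e2 : ∀ t', ∫⁻ s in Ioc 0 t', w t' * k (t' - s)
                = ∫⁻ s, (fun p : ℝ × ℝ => ({p : ℝ × ℝ | 0 < p.2 ∧ p.2 ≤ p.1}).indicator
                    (fun p => w p.1 * k (p.1 - p.2)) p) (t', s) := by
              intro t'
              rw [← lintegral_indicator measurableSet_Ioc]
              rfl
            simp_rw [e2]
            refine Measurable.lintegral_prod_right' ?_
            refine ((hwm.comp measurable_fst).mul hkm).indicator ?_
            exact (measurableSet_lt measurable_const measurable_snd).inter
              (measurableSet_le measurable_snd measurable_fst)
          · exact ENNReal.mul_ne_top hK (by simp)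
      _ ≤ (K * 2⁻¹) * (Γ * (∫⁻ u in Ioc 0 t, w u) + Γ * ∫⁻ u in Ioc 0 t, w u) := by
          gcongr
      _ = K * Γ * (∫⁻ u in Ioc 0 t, w u) * (2⁻¹ * 2) := by ring
      _ = _ := by rw [ENNReal.inv_mul_cancel (by simp) (by simp), mul_one]
  have hGfin : ∀ t, G t ≠ ∞ := fun t => ne_top_of_le_ne_top hB (hGB t)
  have hGle : ∀ t ∈ Icc 0 T, G t ≤ K * Γ * ∫⁻ u in Ioc 0 t, w u := by
    intro t ht
    refine iSup₂_le fun s hs => (hmain s ⟨hs.1, hs.2.trans (min_le_right _ _)⟩).trans ?_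
    gcongr
    exact hs.2.trans (min_le_left _ _)
  have hGrm : Monotone fun t => (G t).toReal := fun x y hxy =>
    ENNReal.toReal_mono (hGfin y) (hGm hxy)
  have hq : IntervalIntegrable (fun t => a t ^ 2) volume 0 T := by
    rw [intervalIntegrable_iff_integrableOn_Icc_of_le hT]; exact ha2
  have hGr := nonlinear_gronwall hT (q := fun t => a t ^ 2) (G := fun t => (G t).toReal)
    (C := K.toReal * Γ.toReal) hβ0 hβ1 (by positivity) (fun t => sq_nonneg _) hq hGrm
    (fun t => ENNReal.toReal_nonneg) ?_
  · rw [intervalIntegral.integral_of_le hT, ← integral_Icc_eq_integral_Ioc] at hGr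
    refine le_trans ?_ hGr
    exact rpow_le_rpow ENNReal.toReal_nonneg
      (ENNReal.toReal_mono (hGfin T) (hFG T ⟨hT, le_rfl⟩)) (by linarith)
  · intro t ht
    have hwr : ∀ u, ENNReal.ofReal (a u ^ 2 * (G u).toReal ^ β) = w u := by
      intro u
      rw [ENNReal.ofReal_mul (sq_nonneg _), ENNReal.toReal_rpow, ENNReal.ofReal_toReal
        (ENNReal.rpow_ne_top_of_nonneg hβ0 (hGfin u)), hw]
      congr 1
      rw [← ofReal_norm, ← ENNReal.ofReal_pow (norm_nonneg _), norm_eq_abs, sq_abs]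
    have hwi : ∫ u in (0 : ℝ)..t, a u ^ 2 * (G u).toReal ^ β
        = (∫⁻ u in Ioc 0 t, w u).toReal := by
      rw [intervalIntegral.integral_of_le ht.1, integral_eq_lintegral_of_nonneg_ae]
      · simp_rw [hwr]
      · exact Eventually.of_forall fun u => by positivity
      · exact ((ha.pow_const 2).mul (hGrm.measurable.pow_const β)).aestronglyMeasurable
    have hwfin : ∫⁻ u in Ioc 0 t, w u ≠ ∞ := by
      have h1 : ∫⁻ u in Ioc 0 t, w u ≤ (∫⁻ u in Icc 0 T, ‖a u ^ 2‖ₑ) * B ^ β := by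
        rw [← lintegral_mul_const _ (ha.pow_const 2).enorm]
        refine (lintegral_mono_set (Ioc_subset_Icc_self.trans (Icc_subset_Icc_right ht.2))).trans ?_
        refine lintegral_mono fun u => ?_
        simp only [hw, enorm_pow]
        exact mul_le_mul_right (ENNReal.rpow_le_rpow (hGB u) hβ0) _
      refine ne_top_of_le_ne_top (ENNReal.mul_ne_top ha2.2.ne ?_) h1
      exact ENNReal.rpow_ne_top_of_nonneg hβ0 hB
    have h2 := ENNReal.toReal_mono
      (ENNReal.mul_ne_top (ENNReal.mul_ne_top hK hΓ) hwfin) (hGle t ht)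
    rw [ENNReal.toReal_mul, ENNReal.toReal_mul] at h2
    rw [hwi]
    exact h2

/-! ### Covariances and independent σ-fields -/

/-- Set integrals over products of an event of `R` and an event of an independent σ-field
factorize. -/
theorem setIntegral_indep_inter {Ω : Type*} {m0 : MeasurableSpace Ω} {P : Measure Ω}
    [IsProbabilityMeasure P] {R Rp : MeasurableSpace Ω} (hR : R ≤ m0) (hRp : Rp ≤ m0)
    (hind : Indep R Rp P) {Z : Ω → ℝ}
    (hZ : StronglyMeasurable[R] Z) (hZi : Integrable Z P) {a b : Set Ω}
    (ha : MeasurableSet[Rp] a) (hb : MeasurableSet[R] b) :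
    ∫ ω in a ∩ b, Z ω ∂P = P.real a * ∫ ω in b, Z ω ∂P := by
  have h1 : P[b.indicator Z | Rp] =ᵐ[P] fun _ => P[b.indicator Z] :=
    condExp_indep_eq hR hRp (hZ.indicator hb) hind
  have h2 := setIntegral_condExp hRp (hZi.indicator (hR _ hb)) ha
  rw [setIntegral_congr_ae (hRp _ ha) (h1.mono fun ω h _ => h), setIntegral_const,
    setIntegral_indicator (hR _ hb), integral_indicator (hR _ hb), smul_eq_mul] at h2
  exact h2.symm

/-- Enlarging `R₀ ⊆ R` by a σ-field independent of `R` does not change the conditional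
expectation of an `R`-measurable variable. -/
theorem condExp_sup_of_indep {Ω : Type*} {m0 : MeasurableSpace Ω} {P : Measure Ω}
    [IsProbabilityMeasure P] {R Rp R0 : MeasurableSpace Ω} (hR : R ≤ m0) (hRp : Rp ≤ m0)
    (hR0 : R0 ≤ R) (hind : Indep R Rp P) {Z : Ω → ℝ}
    (hZ : StronglyMeasurable[R] Z) (hZi : Integrable Z P) :
    P[Z | Rp ⊔ R0] =ᵐ[P] P[Z | R0] := by
  have hR0m : R0 ≤ m0 := hR0.trans hR
  have hsup : Rp ⊔ R0 ≤ m0 := sup_le hRp hR0m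
  have hmeas : StronglyMeasurable[Rp ⊔ R0] (P[Z | R0]) :=
    stronglyMeasurable_condExp.mono le_sup_right
  symm
  refine ae_eq_condExp_of_forall_setIntegral_eq hsup hZi
    (fun s _ _ => integrable_condExp.integrableOn) (fun s hs _ => ?_)
    hmeas.aestronglyMeasurable
  set 𝒞 : Set (Set Ω) := image2 (· ∩ ·) {a | MeasurableSet[Rp] a} {b | MeasurableSet[R0] b} with h𝒞
  have hgen : Rp ⊔ R0 = MeasurableSpace.generateFrom 𝒞 := by
    refine le_antisymm (sup_le ?_ ?_) (MeasurableSpace.generateFrom_le ?_)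
    · intro a ha
      exact MeasurableSpace.measurableSet_generateFrom
        ⟨a, ha, univ, MeasurableSet.univ, inter_univ a⟩
    · intro b hb
      exact MeasurableSpace.measurableSet_generateFrom
        ⟨univ, MeasurableSet.univ, b, hb, univ_inter b⟩
    · rintro _ ⟨a, ha, b, hb, rfl⟩
      have ha' : MeasurableSet[Rp ⊔ R0] a := (le_sup_left : Rp ≤ Rp ⊔ R0) _ ha
      have hb' : MeasurableSet[Rp ⊔ R0] b := (le_sup_right : R0 ≤ Rp ⊔ R0) _ hb
      exact ha'.inter hb'
  have hpi : IsPiSystem 𝒞 := by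
    rintro _ ⟨a, ha, b, hb, rfl⟩ _ ⟨a', ha', b', hb', rfl⟩ _
    exact ⟨a ∩ a', MeasurableSet.inter ha ha', b ∩ b', MeasurableSet.inter hb hb',
      inter_inter_inter_comm a a' b b'⟩
  have htot : ∫ ω, (P[Z | R0]) ω ∂P = ∫ ω, Z ω ∂P := integral_condExp hR0m
  induction s, hs using MeasurableSpace.induction_on_inter hgen hpi with
  | empty => simp
  | basic s hs =>
    obtain ⟨a, ha, b, hb, rfl⟩ := hs
    rw [setIntegral_indep_inter hR hRp hind hZ hZi ha (hR0 _ hb),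
      setIntegral_indep_inter hR hRp hind (stronglyMeasurable_condExp.mono hR0)
        integrable_condExp ha (hR0 _ hb), setIntegral_condExp hR0m hZi hb]
  | compl s hs ih =>
    have h1 := integral_add_compl (hsup _ hs) hZi
    have h2 := integral_add_compl (hsup _ hs) (integrable_condExp (m := R0) (f := Z) (μ := P))
    have := ih (measure_lt_top _ _)
    linarith
  | iUnion s hd hs ih =>
    rw [integral_iUnion (fun i => hsup _ (hs i)) hd hZi.integrableOn,
      integral_iUnion (fun i => hsup _ (hs i)) hd integrable_condExp.integrableOn]
    exact tsum_congr fun i => ih i (measure_lt_top _ _)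

/-- The mixing covariance estimate: an `R`-measurable factor only sees the part of a centred
variable `Y` that is not explained by `Rp ⊔ R0`. -/
theorem covariance_bound {Ω : Type*} {m0 : MeasurableSpace Ω} {P : Measure Ω}
    [IsProbabilityMeasure P] {R Rp R0 : MeasurableSpace Ω} (hR : R ≤ m0) (hRp : Rp ≤ m0)
    (hR0 : R0 ≤ R) (hind : Indep R Rp P) {p q : ℝ} (hpq : p.HolderConjugate q) {Z Y : Ω → ℝ}
    (hZ : StronglyMeasurable[R] Z) (hZp : MemLp Z (ENNReal.ofReal p) P)
    (hY : MemLp Y (ENNReal.ofReal q) P) (hY0 : P[Y | R0] =ᵐ[P] 0) :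
    ‖∫ ω, Z ω * Y ω ∂P‖ₑ ≤ eLpNorm Z (ENNReal.ofReal p) P
      * eLpNorm (fun ω => Y ω - (P[Y | Rp ⊔ R0]) ω) (ENNReal.ofReal q) P := by
  have hp1 : 1 ≤ ENNReal.ofReal p := ENNReal.one_le_ofReal.2 hpq.lt.le
  have hq1 : 1 ≤ ENNReal.ofReal q := ENNReal.one_le_ofReal.2 hpq.symm.lt.le
  have hconj : ENNReal.HolderConjugate (ENNReal.ofReal p) (ENNReal.ofReal q) := hpq.ennrealOfReal
  have hR0m : R0 ≤ m0 := hR0.trans hR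
  have hsup : Rp ⊔ R0 ≤ m0 := sup_le hRp hR0m
  set G := Rp ⊔ R0 with hG
  have hZi := hZp.integrable hp1
  have hYi := hY.integrable hq1
  have hYG : MemLp (P[Y | G]) (ENNReal.ofReal q) P := hY.condExp hq1
  have hZ0 : MemLp (P[Z | R0]) (ENNReal.ofReal p) P := hZp.condExp hp1
  have i1 : Integrable (Z * P[Y | G]) P := hZp.integrable_mul hYG
  have i2 : Integrable (P[Z | R0] * Y) P := hZ0.integrable_mul hY
  have hzero : ∫ ω, Z ω * (P[Y | G]) ω ∂P = 0 := by
    have e1 : P[Z * P[Y | G] | G] =ᵐ[P] P[P[Z | R0] * Y | G] := by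
      have a1 := condExp_mul_of_stronglyMeasurable_right (m := G) (μ := P)
        (stronglyMeasurable_condExp (m := G) (f := Y) (μ := P)) i1 hZi
      have a2 := condExp_mul_of_stronglyMeasurable_left (m := G) (μ := P)
        ((stronglyMeasurable_condExp (m := R0) (f := Z) (μ := P)).mono le_sup_right) i2 hYi
      filter_upwards [a1, a2, condExp_sup_of_indep hR hRp hR0 hind hZ hZi] with ω h1 h2 h3
      rw [h1, h2, Pi.mul_apply, Pi.mul_apply, h3]
    have e2 : P[P[Z | R0] * Y | R0] =ᵐ[P] 0 := by
      have a2 := condExp_mul_of_stronglyMeasurable_left (m := R0) (μ := P)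
        (stronglyMeasurable_condExp (m := R0) (f := Z) (μ := P)) i2 hYi
      filter_upwards [a2, hY0] with ω h1 h2
      rw [h1, Pi.mul_apply, h2]; simp
    calc ∫ ω, Z ω * (P[Y | G]) ω ∂P = ∫ ω, (P[Z * P[Y | G] | G]) ω ∂P :=
          (integral_condExp hsup).symm
      _ = ∫ ω, (P[P[Z | R0] * Y | G]) ω ∂P := integral_congr_ae e1
      _ = ∫ ω, (P[Z | R0] * Y) ω ∂P := integral_condExp hsup
      _ = ∫ ω, (P[P[Z | R0] * Y | R0]) ω ∂P := (integral_condExp hR0m).symm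
      _ = 0 := by rw [integral_congr_ae e2]; simp
  have heq : ∫ ω, Z ω * Y ω ∂P = ∫ ω, Z ω * (Y ω - (P[Y | G]) ω) ∂P := by
    have i3 : Integrable (fun ω => Z ω * Y ω) P := hZp.integrable_mul hY
    simp_rw [mul_sub]
    have i4 : Integrable (fun ω => Z ω * (P[Y | G]) ω) P := i1
    rw [integral_sub i3 i4, hzero, sub_zero]
  rw [heq]
  refine (enorm_integral_le_lintegral_enorm _).trans ?_
  have := eLpNorm_smul_le_mul_eLpNorm (μ := P) (p := ENNReal.ofReal p) (q := ENNReal.ofReal q)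
    (r := 1) (f := fun ω => Y ω - (P[Y | G]) ω) (φ := Z)
    (hY.1.sub hYG.1) hZp.1
  rw [eLpNorm_one_eq_lintegral_enorm] at this
  exact this

/-! ### The expected chain rule and elementary moment bounds -/

theorem measurable_running_integral {Ω : Type*} [MeasurableSpace Ω] {h : ℝ → Ω → ℝ}
    (hh : Measurable (Function.uncurry h)) :
    Measurable fun p : ℝ × Ω => ∫ u in Ioc 0 p.1, h u p.2 := by
  have e : (fun p : ℝ × Ω => ∫ u in Ioc 0 p.1, h u p.2)
      = fun p : ℝ × Ω => ∫ u, (fun q : (ℝ × Ω) × ℝ =>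
          ({q : (ℝ × Ω) × ℝ | 0 < q.2 ∧ q.2 ≤ q.1.1}).indicator
            (fun q => h q.2 q.1.2) q) (p, u) := by
    funext p
    rw [← integral_indicator measurableSet_Ioc]
    rfl
  rw [e]
  refine (StronglyMeasurable.integral_prod_right' (Measurable.stronglyMeasurable ?_)).measurable
  refine Measurable.indicator (hh.comp (by fun_prop : Measurable fun q : (ℝ × Ω) × ℝ =>
    (q.2, q.1.2))) ?_
  exact (measurableSet_lt measurable_const measurable_snd).inter
    (measurableSet_le measurable_snd (measurable_fst.comp measurable_fst))

/-- Expected chain rule: integrating `ψ(S_t) = ∫₀ᵗ ψ'(S_s) f_s Y_s ds` against a random weight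
`V` and exchanging the two integrals. -/
theorem expected_chain_bound {Ω : Type*} {m0 : MeasurableSpace Ω} {P : Measure Ω}
    [IsProbabilityMeasure P] {T : ℝ} {f : ℝ → ℝ} (hf : Measurable f)
    (hfA : ∫⁻ u in Ioc 0 T, ‖f u‖ₑ ≠ ∞) {Y : ℝ → Ω → ℝ} (hY : Measurable (Function.uncurry Y))
    (hint : ∀ᵐ ω ∂P, IntervalIntegrable (fun u => f u * Y u ω) volume 0 T)
    {ψ ψ' : ℝ → ℝ} (hψ0 : ψ 0 = 0) (hd : ∀ x, HasDerivAt ψ (ψ' x) x) (hψ' : Continuous ψ')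
    {V : Ω → ℝ} (hV : Measurable V) {t : ℝ} (ht : t ∈ Icc 0 T) {D : ℝ≥0∞} (hD : D ≠ ∞)
    (hbd : ∀ s ∈ Ioc 0 t,
      ∫⁻ ω, ‖ψ' (∫ u in Ioc 0 s, f u * Y u ω) * Y s ω * V ω‖ₑ ∂P ≤ D) :
    ‖∫ ω, ψ (∫ u in Ioc 0 t, f u * Y u ω) * V ω ∂P‖ₑ ≤
      ∫⁻ s in Ioc 0 t, ‖f s‖ₑ *
        ‖∫ ω, ψ' (∫ u in Ioc 0 s, f u * Y u ω) * Y s ω * V ω ∂P‖ₑ := by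
  have hfY : Measurable (Function.uncurry fun u ω => f u * Y u ω) :=
    (hf.comp measurable_fst).mul hY
  have hSm := measurable_running_integral hfY
  have hΦm : Measurable fun p : ℝ × Ω =>
      f p.1 * (ψ' (∫ u in Ioc 0 p.1, f u * Y u p.2) * Y p.1 p.2 * V p.2) :=
    (hf.comp measurable_fst).mul
      (((hψ'.measurable.comp hSm).mul hY).mul (hV.comp measurable_snd))
  have hpath : ∀ᵐ ω ∂P, ψ (∫ u in Ioc 0 t, f u * Y u ω) * V ω
      = ∫ s in Ioc 0 t, f s * (ψ' (∫ u in Ioc 0 s, f u * Y u ω) * Y s ω * V ω) := by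
    filter_upwards [hint] with ω hω
    have hω' : IntervalIntegrable (fun u => f u * Y u ω) volume 0 t :=
      hω.mono_set (by rw [uIcc_of_le ht.1, uIcc_of_le (ht.1.trans ht.2)]
                      exact Icc_subset_Icc_right ht.2)
    have hScont : ContinuousOn (fun s => ∫ u in (0 : ℝ)..s, f u * Y u ω) (Icc 0 t) := by
      have := (hω'.absolutelyContinuousOnInterval_intervalIntegral (c := 0)
        (by simp)).continuousOn
      rwa [uIcc_of_le ht.1] at this
    obtain ⟨R, hR⟩ := isCompact_Icc.exists_bound_of_continuousOn hScont
    have := chain_rule_integral ht.1 hω' (ψ := ψ) (ψ' := ψ') (s := Icc (-R) R) (convex_Icc _ _)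
      isCompact_Icc (fun s hs => abs_le.1 (hR s hs)) (fun x _ => hd x) hψ'.continuousOn
    rw [hψ0, sub_zero, intervalIntegral.integral_of_le ht.1,
      intervalIntegral.integral_of_le ht.1] at this
    rw [← this, ← integral_mul_const]
    refine setIntegral_congr_fun measurableSet_Ioc fun s hs => ?_
    simp only [intervalIntegral.integral_of_le hs.1.le]
    ring
  have hprod : Integrable (Function.uncurry fun (ω : Ω) (s : ℝ) =>
      f s * (ψ' (∫ u in Ioc 0 s, f u * Y u ω) * Y s ω * V ω))
      (P.prod (volume.restrict (Ioc 0 t))) := by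
    have hm' : Measurable (Function.uncurry fun (ω : Ω) (s : ℝ) =>
        f s * (ψ' (∫ u in Ioc 0 s, f u * Y u ω) * Y s ω * V ω)) := hΦm.comp measurable_swap
    refine ⟨hm'.aestronglyMeasurable, ?_⟩
    unfold HasFiniteIntegral
    rw [lintegral_prod_symm _ hm'.enorm.aemeasurable]
    simp only [Function.uncurry_apply_pair]
    have hb : ∫⁻ s in Ioc 0 t, ∫⁻ ω, ‖f s * (ψ' (∫ u in Ioc 0 s, f u * Y u ω) * Y s ω * V ω)‖ₑ ∂P
        ≤ ∫⁻ s in Ioc 0 t, ‖f s‖ₑ * D := by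
      refine setLIntegral_mono' measurableSet_Ioc fun s hs => ?_
      simp_rw [enorm_mul (f s)]
      rw [lintegral_const_mul' _ _ enorm_ne_top]
      exact mul_le_mul_right (hbd s hs) _
    refine hb.trans_lt ?_
    rw [lintegral_mul_const _ hf.enorm]
    refine ENNReal.mul_lt_top ?_ hD.lt_top
    exact (lintegral_mono_set (Ioc_subset_Ioc_right ht.2)).trans_lt hfA.lt_top
  rw [integral_congr_ae hpath, integral_integral_swap hprod]
  refine (enorm_integral_le_lintegral_enorm _).trans_eq ?_
  refine lintegral_congr fun s => ?_
  rw [integral_const_mul, enorm_mul]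

theorem hasDerivAt_mul_abs_rpow {r : ℝ} (hr : 2 ≤ r) (x : ℝ) :
    HasDerivAt (fun x : ℝ => r * (x * |x| ^ (r - 2))) (r * ((r - 1) * |x| ^ (r - 2))) x := by
  refine HasDerivAt.const_mul r ?_
  rcases eq_or_lt_of_le hr with rfl | hr'
  · simp only [sub_self, rpow_zero, mul_one]
    exact (hasDerivAt_id' x).congr_deriv (by norm_num)
  rcases eq_or_ne x 0 with rfl | hx
  · rw [abs_zero, zero_rpow (by linarith), mul_zero, hasDerivAt_iff_tendsto_slope_zero]
    have h1 : Tendsto (fun t : ℝ => |t| ^ (r - 2)) (𝓝[≠] 0) (𝓝 0) := by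
      have : Continuous fun t : ℝ => |t| ^ (r - 2) :=
        continuous_abs.rpow_const fun _ => Or.inr (by linarith)
      have h := this.tendsto 0
      rw [abs_zero, zero_rpow (by linarith)] at h
      exact h.mono_left nhdsWithin_le_nhds
    refine h1.congr' ?_
    filter_upwards [self_mem_nhdsWithin] with t ht
    have ht' : t ≠ 0 := ht
    simp [ht']
  · have h1 := (hasDerivAt_id x).mul ((hasDerivAt_abs hx).rpow_const (p := r - 2)
      (Or.inl (abs_ne_zero.2 hx)))
    refine HasDerivAt.congr_deriv h1 ?_
    have hs : x * (SignType.sign x : ℝ) = |x| := self_mul_sign x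
    have h2 : |x| * |x| ^ (r - 2 - 1) = |x| ^ (r - 2) := by
      rw [mul_comm, ← rpow_add_one (abs_ne_zero.2 hx)]; congr 1; ring
    simp only [id]
    calc 1 * |x| ^ (r - 2) + x * (SignType.sign x * (r - 2) * |x| ^ (r - 2 - 1))
        = |x| ^ (r - 2) + (r - 2) * ((x * SignType.sign x) * |x| ^ (r - 2 - 1)) := by ring
      _ = _ := by rw [hs, h2]; ring

/-- Young-type bound `a^{r-2} b c ≤ a^r + b^r + c^r`, by comparison with the largest factor. -/
theorem rpow_mul_mul_le {r : ℝ} (hr : 2 ≤ r) (a b c : ℝ≥0∞) :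
    a ^ (r - 2) * b * c ≤ a ^ r + b ^ r + c ^ r := by
  set M := max a (max b c) with hM
  have ha : a ≤ M := le_max_left _ _
  have hb : b ≤ M := (le_max_left _ _).trans (le_max_right _ _)
  have hc : c ≤ M := (le_max_right _ _).trans (le_max_right _ _)
  have h1 : a ^ (r - 2) * b * c ≤ M ^ r := by
    calc a ^ (r - 2) * b * c ≤ M ^ (r - 2) * M * M := by
          have := ENNReal.rpow_le_rpow ha (by linarith : 0 ≤ r - 2)
          gcongr
      _ = M ^ (r - 2) * M ^ (2 : ℝ) := by
          rw [mul_assoc, ← sq, ← ENNReal.rpow_natCast M 2]; norm_num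
      _ = M ^ r := by
          rw [← ENNReal.rpow_add_of_nonneg _ _ (by linarith) (by norm_num)]; congr 1; ring
  refine h1.trans ?_
  have h2 : M = a ∨ M = b ∨ M = c := by
    rcases max_choice a (max b c) with h | h
    · exact Or.inl h
    · rcases max_choice b c with h' | h'
      · exact Or.inr (Or.inl (h.trans h'))
      · exact Or.inr (Or.inr (h.trans h'))
  rcases h2 with h | h | h <;> rw [h]
  · rw [add_assoc]; exact le_self_add
  · rw [add_right_comm]; exact le_add_self
  · exact le_add_self

/-- Moment bound for the total variation `∫₀ᵀ |f_u Y_u| du` (Hölder with respect to `|f| du`). -/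
theorem lintegral_total_variation_rpow_le {Ω : Type*} {m0 : MeasurableSpace Ω} {P : Measure Ω}
    [IsProbabilityMeasure P] {r : ℝ} (hr : 2 ≤ r) {T : ℝ} {f : ℝ → ℝ} (hf : Measurable f)
    {Y : ℝ → Ω → ℝ} (hY : Measurable (Function.uncurry Y)) {m : ℝ≥0∞}
    (hYm : ∀ t ∈ Icc 0 T, ∫⁻ ω, ‖Y t ω‖ₑ ^ r ∂P ≤ m) :
    ∫⁻ ω, (∫⁻ u in Ioc 0 T, ‖f u‖ₑ * ‖Y u ω‖ₑ) ^ r ∂P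
      ≤ (∫⁻ u in Ioc 0 T, ‖f u‖ₑ) ^ (r - 1) * ((∫⁻ u in Ioc 0 T, ‖f u‖ₑ) * m) := by
  set A := ∫⁻ u in Ioc 0 T, ‖f u‖ₑ with hA
  have hYω : ∀ ω, Measurable fun u => Y u ω := fun ω => hY.comp measurable_prodMk_right
  have hr0 : 0 < r := by linarith
  have hpt : ∀ ω, (∫⁻ u in Ioc 0 T, ‖f u‖ₑ * ‖Y u ω‖ₑ) ^ r
      ≤ A ^ (r - 1) * ∫⁻ u in Ioc 0 T, ‖f u‖ₑ * ‖Y u ω‖ₑ ^ r := by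
    intro ω
    have e : ∀ u, ‖f u‖ₑ * ‖Y u ω‖ₑ
        = ‖f u‖ₑ ^ ((r - 1) / r) * (‖f u‖ₑ * ‖Y u ω‖ₑ ^ r) ^ (1 / r) := by
      intro u
      rw [ENNReal.mul_rpow_of_nonneg _ _ (by positivity), ← ENNReal.rpow_mul,
        mul_one_div_cancel hr0.ne', ENNReal.rpow_one, ← mul_assoc,
        ← ENNReal.rpow_add_of_nonneg _ _ (div_nonneg (by linarith) hr0.le) (by positivity)]
      rw [show (r - 1) / r + 1 / r = 1 by field_simp; ring, ENNReal.rpow_one]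
    simp_rw [e]
    have h := ENNReal.lintegral_mul_norm_pow_le (μ := volume.restrict (Ioc 0 T))
      (f := fun u => ‖f u‖ₑ) (g := fun u => ‖f u‖ₑ * ‖Y u ω‖ₑ ^ r) hf.enorm.aemeasurable
      (hf.enorm.mul ((hYω ω).enorm.pow_const r)).aemeasurable
      (p := (r - 1) / r) (q := 1 / r) (div_nonneg (by linarith) hr0.le) (by positivity)
      (by field_simp; ring)
    refine (ENNReal.rpow_le_rpow h hr0.le).trans_eq ?_
    rw [ENNReal.mul_rpow_of_nonneg _ _ hr0.le, ← ENNReal.rpow_mul, ← ENNReal.rpow_mul,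
      div_mul_cancel₀ _ hr0.ne', div_mul_cancel₀ _ hr0.ne', ENNReal.rpow_one]
  refine (lintegral_mono hpt).trans ?_
  have hm1 : Measurable fun p : Ω × ℝ => ‖f p.2‖ₑ * ‖Y p.2 p.1‖ₑ ^ r :=
    (hf.comp measurable_snd).enorm.mul ((hY.comp measurable_swap).enorm.pow_const r)
  rw [lintegral_const_mul _ (hm1.lintegral_prod_right')]
  refine mul_le_mul_right ?_ _
  rw [lintegral_lintegral_swap hm1.aemeasurable, hA, ← lintegral_mul_const _ hf.enorm]
  refine setLIntegral_mono' measurableSet_Ioc fun u hu => ?_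
  change ∫⁻ ω, ‖f u‖ₑ * ‖Y u ω‖ₑ ^ r ∂P ≤ ‖f u‖ₑ * m
  rw [lintegral_const_mul' _ _ enorm_ne_top]
  exact mul_le_mul_right (hYm u ⟨hu.1.le, hu.2⟩) _

/-! ### The unconditional moment inequality -/

/-- Hölder bound `‖|S|^{r-2} Y‖_{r/(r-1)} ≤ ‖S‖_r^{r-2} ‖Y‖_r`. -/
theorem eLpNorm_abs_rpow_mul_le {Ω : Type*} {m0 : MeasurableSpace Ω} {P : Measure Ω}
    {r : ℝ} (hr : 2 ≤ r) {S Y : Ω → ℝ} (hS : Measurable S) (hY : Measurable Y) {m : ℝ≥0∞}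
    (hYm : ∫⁻ ω, ‖Y ω‖ₑ ^ r ∂P ≤ m ^ r) :
    eLpNorm (fun ω => |S ω| ^ (r - 2) * Y ω) (ENNReal.ofReal (r / (r - 1))) P
      ≤ (∫⁻ ω, ‖S ω‖ₑ ^ r ∂P) ^ (1 - 2 / r) * m := by
  have hr0 : 0 < r := by linarith
  have hr1 : 0 < r - 1 := by linarith
  have hq : 0 < r / (r - 1) := div_pos hr0 hr1
  rw [eLpNorm_eq_lintegral_rpow_enorm_toReal (by simpa using hq) ENNReal.ofReal_ne_top,
    ENNReal.toReal_ofReal hq.le]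
  have e : ∀ ω, ‖|S ω| ^ (r - 2) * Y ω‖ₑ ^ (r / (r - 1))
      = (‖S ω‖ₑ ^ r) ^ ((r - 2) / (r - 1)) * (‖Y ω‖ₑ ^ r) ^ (1 / (r - 1)) := by
    intro ω
    rw [enorm_mul, enorm_rpow_of_nonneg (abs_nonneg _) (by linarith), enorm_abs,
      ENNReal.mul_rpow_of_nonneg _ _ hq.le, ← ENNReal.rpow_mul, ← ENNReal.rpow_mul,
      ← ENNReal.rpow_mul]
    congr 2 <;> field_simp
  simp_rw [e]
  have h := ENNReal.lintegral_mul_norm_pow_le (μ := P)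
      (f := fun ω => ‖S ω‖ₑ ^ r) (g := fun ω => ‖Y ω‖ₑ ^ r) (hS.enorm.pow_const r).aemeasurable
      (hY.enorm.pow_const r).aemeasurable
      (p := (r - 2) / (r - 1)) (q := 1 / (r - 1)) (div_nonneg (by linarith) hr1.le) (by positivity)
      (by field_simp; ring)
  refine (ENNReal.rpow_le_rpow h (by positivity)).trans ?_
  rw [ENNReal.mul_rpow_of_nonneg _ _ (by positivity), ← ENNReal.rpow_mul, ← ENNReal.rpow_mul]
  have h1 : (r - 2) / (r - 1) * (1 / (r / (r - 1))) = 1 - 2 / r := by field_simp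
  have h2 : 1 / (r - 1) * (1 / (r / (r - 1))) = 1 / r := by field_simp
  rw [h1, h2]
  refine mul_le_mul_right ?_ _
  refine (ENNReal.rpow_le_rpow hYm (by positivity)).trans_eq ?_
  rw [← ENNReal.rpow_mul, mul_one_div_cancel hr0.ne', ENNReal.rpow_one]

/-- Unconditional moment inequality under an abstract covariance bound. With
`F t = E|S_t|^r` and `S_t = ∫₀ᵗ f_u Y_u du`, two applications of the chain rule express `F` through
the covariances `E[|S_s|^{r-2} Y_s Y_t]`; these are controlled by `F(s)^{1-2/r}`, and the resulting
integral inequality is closed by `moment_gronwall`. -/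
theorem core_moment {Ω : Type*} {m0 : MeasurableSpace Ω} {P : Measure Ω}
    [IsProbabilityMeasure P] {r : ℝ} (hr : 2 ≤ r) {T : ℝ} (hT : 0 ≤ T) {f : ℝ → ℝ}
    (hf : Measurable f) (hf2 : IntegrableOn (fun t => f t ^ 2) (Icc 0 T))
    {Y : ℝ → Ω → ℝ} (hY : Measurable (Function.uncurry Y)) {m : ℝ≥0∞} (hm : m ≠ ∞)
    (hYm : ∀ t ∈ Icc 0 T, ∫⁻ ω, ‖Y t ω‖ₑ ^ r ∂P ≤ m ^ r)
    {k : ℝ → ℝ≥0∞} (hk : Measurable k) {Γ : ℝ≥0∞} (hkΓ : ∫⁻ x, k x ≤ Γ) (hΓ : Γ ≠ ∞)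
    (hcov : ∀ t ∈ Icc 0 T, ∀ s ∈ Ioc 0 t,
      MemLp (fun ω => |∫ u in Ioc 0 s, f u * Y u ω| ^ (r - 2) * Y s ω)
        (ENNReal.ofReal (r / (r - 1))) P →
      ‖∫ ω, |∫ u in Ioc 0 s, f u * Y u ω| ^ (r - 2) * Y s ω * Y t ω ∂P‖ₑ ≤
        eLpNorm (fun ω => |∫ u in Ioc 0 s, f u * Y u ω| ^ (r - 2) * Y s ω)
          (ENNReal.ofReal (r / (r - 1))) P * k (t - s)) :
    (∀ᵐ ω ∂P, IntervalIntegrable (fun u => f u * Y u ω) volume 0 T) ∧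
    ∫⁻ ω, ‖∫ u in Ioc 0 T, f u * Y u ω‖ₑ ^ r ∂P ≠ ∞ ∧
    (∫⁻ ω, ‖∫ u in Ioc 0 T, f u * Y u ω‖ₑ ^ r ∂P).toReal ^ (2 / r)
      ≤ 2 * (r - 1) * (m.toReal * Γ.toReal) * ∫ t in Icc 0 T, f t ^ 2 := by
  have hr0 : 0 < r := by linarith
  set S : ℝ → Ω → ℝ := fun s ω => ∫ u in Ioc 0 s, f u * Y u ω with hSdef
  have hfY : Measurable (Function.uncurry fun u ω => f u * Y u ω) :=
    (hf.comp measurable_fst).mul hY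
  have hSjoint : Measurable fun p : ℝ × Ω => S p.1 p.2 := measurable_running_integral hfY
  have hSm : ∀ s, Measurable (S s) := fun s => hSjoint.comp measurable_prodMk_left
  have hYmeas : ∀ s, Measurable (Y s) := fun s => hY.comp measurable_prodMk_left
  have hfint : IntegrableOn f (Icc 0 T) :=
    ((memLp_two_iff_integrable_sq hf.aestronglyMeasurable).2 hf2).integrable one_le_two
  set A := ∫⁻ u in Ioc 0 T, ‖f u‖ₑ with hAdef
  have hA : A ≠ ∞ := ((hfint.mono_set Ioc_subset_Icc_self).2).ne
  set L : Ω → ℝ≥0∞ := fun ω => ∫⁻ u in Ioc 0 T, ‖f u‖ₑ * ‖Y u ω‖ₑ with hLdef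
  have hLm : Measurable L := by
    have hm1 : Measurable fun p : Ω × ℝ => ‖f p.2‖ₑ * ‖Y p.2 p.1‖ₑ :=
      (hf.comp measurable_snd).enorm.mul (hY.comp measurable_swap).enorm
    exact hm1.lintegral_prod_right'
  set B : ℝ≥0∞ := A ^ (r - 1) * (A * m ^ r) with hBdef
  have hmr : m ^ r ≠ ∞ := ENNReal.rpow_ne_top_of_nonneg hr0.le hm
  have hB : B ≠ ∞ := ENNReal.mul_ne_top (ENNReal.rpow_ne_top_of_nonneg (by linarith) hA)
    (ENNReal.mul_ne_top hA hmr)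
  have hLB : ∫⁻ ω, L ω ^ r ∂P ≤ B := lintegral_total_variation_rpow_le hr hf hY hYm
  have hint : ∀ᵐ ω ∂P, IntervalIntegrable (fun u => f u * Y u ω) volume 0 T := by
    filter_upwards [ae_lt_top (hLm.pow_const r) (hLB.trans_lt hB.lt_top).ne] with ω hω
    have hω' : L ω < ∞ := by
      by_contra h
      rw [not_lt_top_iff.1 h, ENNReal.top_rpow_of_pos hr0] at hω
      exact lt_irrefl _ hω
    rw [intervalIntegrable_iff_integrableOn_Ioc_of_le hT]
    refine ⟨(hfY.comp measurable_prodMk_right).aestronglyMeasurable, ?_⟩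
    unfold HasFiniteIntegral
    simp_rw [enorm_mul]
    exact hω'
  have hSL : ∀ t ∈ Icc 0 T, ∀ ω, ‖S t ω‖ₑ ≤ L ω := by
    intro t ht ω
    refine (enorm_integral_le_lintegral_enorm _).trans ?_
    simp_rw [enorm_mul]
    exact lintegral_mono_set (Ioc_subset_Ioc_right ht.2)
  set F : ℝ → ℝ≥0∞ := fun t => ∫⁻ ω, ‖S t ω‖ₑ ^ r ∂P with hFdef
  have hFB : ∀ t ∈ Icc 0 T, F t ≤ B := fun t ht =>
    (lintegral_mono fun ω => ENNReal.rpow_le_rpow (hSL t ht ω) hr0.le).trans hLB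
  refine ⟨hint, ((hFB T ⟨hT, le_rfl⟩).trans_lt hB.lt_top).ne, ?_⟩
  -- all mixed moments that occur below are bounded by Young's inequality
  have hyoung : ∀ (c : ℝ) (U V W : Ω → ℝ) {bu bv bw : ℝ≥0∞}, Measurable U → Measurable V →
      ∫⁻ ω, ‖U ω‖ₑ ^ r ∂P ≤ bu → ∫⁻ ω, ‖V ω‖ₑ ^ r ∂P ≤ bv → ∫⁻ ω, ‖W ω‖ₑ ^ r ∂P ≤ bw →
      ∫⁻ ω, ‖c‖ₑ * (‖U ω‖ₑ ^ (r - 2) * ‖V ω‖ₑ * ‖W ω‖ₑ) ∂P ≤ ‖c‖ₑ * (bu + bv + bw) := by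
    intro c U V W bu bv bw hU hV h1 h2 h3
    rw [lintegral_const_mul' _ _ enorm_ne_top]
    refine mul_le_mul_right ?_ _
    refine (lintegral_mono fun ω => rpow_mul_mul_le hr _ _ _).trans ?_
    have hUV : Measurable fun ω => ‖U ω‖ₑ ^ r + ‖V ω‖ₑ ^ r :=
      (hU.enorm.pow_const r).add (hV.enorm.pow_const r)
    rw [lintegral_add_left hUV,
      lintegral_add_left (hU.enorm.pow_const r)]
    exact add_le_add (add_le_add h1 h2) h3
  have hsub : ∀ {t s : ℝ}, t ∈ Icc 0 T → s ∈ Ioc 0 t → s ∈ Icc 0 T := fun ht hs =>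
    ⟨hs.1.le, hs.2.trans ht.2⟩
  set K : ℝ≥0∞ := ‖r * (r - 1)‖ₑ * m with hKdef
  have key : ∀ t ∈ Icc 0 T, F t ≤ ∫⁻ t' in Ioc 0 t, ∫⁻ s in Ioc 0 t',
      K * (‖f t'‖ₑ * ‖f s‖ₑ * F s ^ (1 - 2 / r) * k (t' - s)) := by
    intro t ht
    -- first application: `|S_t|^r = ∫ r |S|^{r-2} S f Y`
    have h1 := expected_chain_bound (P := P) hf hA hY hint (ψ := fun x => |x| ^ r)
      (ψ' := fun x => r * |x| ^ (r - 2) * x) (by simp [hr0.ne'])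
      (fun x => hasDerivAt_abs_rpow x (by linarith))
      (by
        have : Continuous fun x : ℝ => |x| ^ (r - 2) :=
          continuous_abs.rpow_const fun _ => Or.inr (by linarith)
        fun_prop)
      (V := fun _ => 1) measurable_const ht (D := ‖r‖ₑ * (B + B + m ^ r))
      (ENNReal.mul_ne_top enorm_ne_top (by simp [hB, hmr])) (by
        intro s hs
        have hs' := hsub ht hs
        refine le_trans (le_of_eq ?_) (hyoung r (S s) (S s) (Y s) (hSm s) (hSm s) (hFB s hs')
          (hFB s hs') (hYm s hs'))
        refine lintegral_congr fun ω => ?_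
        rw [mul_one, enorm_mul, enorm_mul, enorm_mul, enorm_rpow_of_nonneg (abs_nonneg _)
          (by linarith), enorm_abs]
        simp only [hSdef, mul_assoc])
    have hFt : ‖∫ ω, |S t ω| ^ r * 1 ∂P‖ₑ = F t := by
      have e : ∫ ω, |S t ω| ^ r * 1 ∂P = (F t).toReal := by
        rw [integral_eq_lintegral_of_nonneg_ae (ae_of_all _ fun ω => by positivity)
          (((hSm t).abs.pow_const r).mul_const 1).aestronglyMeasurable]
        congr 1
        refine lintegral_congr fun ω => ?_
        rw [mul_one, ← ENNReal.ofReal_rpow_of_nonneg (abs_nonneg _) hr0.le, ← norm_eq_abs,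
          ofReal_norm]
      rw [e, Real.enorm_of_nonneg ENNReal.toReal_nonneg,
        ENNReal.ofReal_toReal ((hFB t ht).trans_lt hB.lt_top).ne]
    rw [← hFt]
    refine h1.trans ?_
    refine setLIntegral_mono' measurableSet_Ioc fun t' ht' => ?_
    have ht'T := hsub ht ht'
    -- second application: the weight `r S_{t'} |S_{t'}|^{r-2}` is itself expanded over `s ≤ t'`
    have h2 := expected_chain_bound (P := P) hf hA hY hint
      (ψ := fun x => r * (x * |x| ^ (r - 2))) (ψ' := fun x => r * ((r - 1) * |x| ^ (r - 2)))
      (by simp) (hasDerivAt_mul_abs_rpow hr)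
      (by
        have : Continuous fun x : ℝ => |x| ^ (r - 2) :=
          continuous_abs.rpow_const fun _ => Or.inr (by linarith)
        fun_prop)
      (V := Y t') (hYmeas t') ht'T (D := ‖r * (r - 1)‖ₑ * (B + m ^ r + m ^ r))
      (ENNReal.mul_ne_top enorm_ne_top (by simp [hB, hmr])) (by
        intro s hs
        have hs' := hsub ht'T hs
        refine le_trans (le_of_eq ?_) (hyoung (r * (r - 1)) (S s) (Y s) (Y t') (hSm s) (hYmeas s)
          (hFB s hs') (hYm s hs') (hYm t' ht'T))
        refine lintegral_congr fun ω => ?_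
        rw [enorm_mul, enorm_mul, enorm_mul, enorm_mul, enorm_mul,
          enorm_rpow_of_nonneg (abs_nonneg _) (by linarith), enorm_abs]
        simp only [hSdef, mul_assoc])
    have e2 : ∫ ω, r * |S t' ω| ^ (r - 2) * S t' ω * Y t' ω * 1 ∂P
        = ∫ ω, r * (S t' ω * |S t' ω| ^ (r - 2)) * Y t' ω ∂P := by
      congr 1; ext ω; ring
    change ‖f t'‖ₑ * ‖∫ ω, r * |S t' ω| ^ (r - 2) * S t' ω * Y t' ω * 1 ∂P‖ₑ ≤ _
    rw [e2, mul_comm ‖f t'‖ₑ]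
    refine (mul_le_mul_left h2 _).trans ?_
    rw [← lintegral_mul_const' _ _ enorm_ne_top]
    refine setLIntegral_mono' measurableSet_Ioc fun s hs => ?_
    have hs' := hsub ht'T hs
    have e3 : ∫ ω, r * ((r - 1) * |S s ω| ^ (r - 2)) * Y s ω * Y t' ω ∂P
        = (r * (r - 1)) * ∫ ω, |S s ω| ^ (r - 2) * Y s ω * Y t' ω ∂P := by
      rw [← integral_const_mul]
      congr 1; ext ω; ring
    change ‖f s‖ₑ * ‖∫ ω, r * ((r - 1) * |S s ω| ^ (r - 2)) * Y s ω * Y t' ω ∂P‖ₑ * _ ≤ _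
    rw [e3, enorm_mul]
    have hZ := eLpNorm_abs_rpow_mul_le (P := P) hr (hSm s) (hYmeas s) (hYm s hs')
    have hZmem : MemLp (fun ω => |S s ω| ^ (r - 2) * Y s ω) (ENNReal.ofReal (r / (r - 1))) P := by
      refine ⟨?_, hZ.trans_lt (ENNReal.mul_lt_top ?_ hm.lt_top)⟩
      · have h1 := hSm s
        have h2 := hYmeas s
        exact Measurable.aestronglyMeasurable (by fun_prop)
      · exact ENNReal.rpow_lt_top_of_nonneg
          (by rw [sub_nonneg, div_le_one hr0]; exact hr) ((hFB s hs').trans_lt hB.lt_top).ne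
    have hc := (hcov t' ht'T s hs hZmem).trans (mul_le_mul_left hZ _)
    calc ‖f s‖ₑ * (‖r * (r - 1)‖ₑ * ‖∫ ω, |S s ω| ^ (r - 2) * Y s ω * Y t' ω ∂P‖ₑ) * ‖f t'‖ₑ
        ≤ ‖f s‖ₑ * (‖r * (r - 1)‖ₑ * (F s ^ (1 - 2 / r) * m * k (t' - s))) * ‖f t'‖ₑ := by
          gcongr
      _ = _ := by rw [hKdef]; ring
  have hfin := moment_gronwall hT hf hf2 (F := F) (K := K) (Γ := Γ) (B := B) (β := 1 - 2 / r)
    (by rw [sub_nonneg, div_le_one hr0]; exact hr) (by have : 0 < 2 / r := by positivity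
                                                       linarith) hk hkΓ
    (ENNReal.mul_ne_top enorm_ne_top hm) hΓ hB hFB key
  rw [sub_sub_cancel] at hfin
  refine hfin.trans_eq ?_
  have hK : K.toReal = r * (r - 1) * m.toReal := by
    rw [hKdef, ENNReal.toReal_mul, toReal_enorm, norm_of_nonneg (by nlinarith)]
  rw [hK]
  field_simp

/-! ### Localization to an initial event -/

/-- A process jointly measurable on `[0, s] × Ω`, frozen outside `[0, s]`, is jointly measurable on
`ℝ × Ω`. -/
theorem measurable_comp_projIcc {Ω E : Type*} [MeasurableSpace Ω] [MeasurableSpace E]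
    {x : ℝ → Ω → E} {s : ℝ} (hs : 0 ≤ s)
    (h : Measurable fun q : Icc (0 : ℝ) s × Ω => x q.1 q.2) :
    Measurable fun p : ℝ × Ω => x (projIcc 0 s hs p.1) p.2 :=
  h.comp (g := fun q : Icc (0 : ℝ) s × Ω => x q.1 q.2)
    (((continuous_projIcc (h := hs)).measurable.comp measurable_fst).prodMk measurable_snd)

/-- Used with the σ-field `𝓡 s`: the weighted integral up to time `s` of a progressively measurable
process is `𝓡 s`-measurable. -/
theorem measurable_integral_of_prog {Ω : Type*} [MeasurableSpace Ω]
    {x : ℝ → Ω → ℝ} {s : ℝ} (hs : 0 ≤ s)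
    (h : Measurable fun q : Icc (0 : ℝ) s × Ω => x q.1 q.2) {f : ℝ → ℝ} (hf : Measurable f) :
    Measurable fun ω => ∫ u in Ioc 0 s, f u * x u ω := by
  have h1 : Measurable (Function.uncurry fun u ω => f u * x (projIcc 0 s hs u) ω) :=
    (hf.comp measurable_fst).mul (measurable_comp_projIcc hs h)
  have h2 := (measurable_running_integral h1).comp (measurable_prodMk_left (x := s))
  have e : (fun ω => ∫ u in Ioc 0 s, f u * x u ω)
      = fun ω => ∫ u in Ioc 0 s, f u * x (projIcc 0 s hs u) ω := by
    funext ω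
    refine setIntegral_congr_fun measurableSet_Ioc fun u hu => ?_
    simp only [projIcc_of_mem hs (Ioc_subset_Icc_self hu)]
  rw [e]
  exact h2

/-- The unconditional inequality for a scalar process localized to an `𝓡₀`-event `A`, on which the
moments and the mixing terms are controlled by deterministic constants `m` and `g τ`. -/
theorem localized_moment {Ω : Type*} {m0 : MeasurableSpace Ω} {P : Measure Ω}
    [IsProbabilityMeasure P] {𝓡 𝓡p : ℝ → MeasurableSpace Ω}
    (h𝓡mono : Monotone 𝓡) (h𝓡le : ∀ t, 𝓡 t ≤ m0)
    (h𝓡panti : Antitone 𝓡p) (h𝓡ple : ∀ t, 𝓡p t ≤ m0)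
    (h𝓡indep : ∀ t : ℝ, 0 ≤ t → Indep (𝓡 t) (𝓡p t) P)
    {x : ℝ → Ω → ℝ}
    (hprog : ∀ t : ℝ, 0 ≤ t →
      @Measurable (Icc (0 : ℝ) t × Ω) ℝ
        (@Prod.instMeasurableSpace _ _ _ (𝓡 t)) _ (fun q => x (q.1 : ℝ) q.2))
    {r : ℝ} (hr : 2 ≤ r) (hmem : ∀ t, 0 ≤ t → MemLp (x t) (ENNReal.ofReal r) P)
    (hcent : ∀ t, 0 ≤ t → P[x t | 𝓡 0] =ᵐ[P] 0)
    {T : ℝ} (hT : 0 ≤ T) {f : ℝ → ℝ} (hf : Measurable f)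
    (hf2 : IntegrableOn (fun t => f t ^ 2) (Icc 0 T))
    {A : Set Ω} (hA : MeasurableSet[𝓡 0] A) {m : ℝ≥0}
    (hm : ∀ t ∈ Icc 0 T, ∫⁻ ω in A, ‖x t ω‖ₑ ^ r ∂P ≤ (m : ℝ≥0∞) ^ r * P A) {g : ℕ → ℝ≥0}
    (hg : ∀ (τ : ℕ) (t : ℝ), (τ : ℝ) ≤ t → t ≤ T →
      ∫⁻ ω in A, ‖x t ω - (P[x t | 𝓡p (t - τ) ⊔ 𝓡 0]) ω‖ₑ ^ r ∂P ≤ (g τ : ℝ≥0∞) ^ r * P A) :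
    (∀ᵐ ω ∂P, ω ∈ A → IntervalIntegrable (fun u => f u * x u ω) volume 0 T) ∧
    ∫⁻ ω in A, ‖∫ u in Ioc 0 T, f u * x u ω‖ₑ ^ r ∂P ≠ ∞ ∧
    (∫⁻ ω in A, ‖∫ u in Ioc 0 T, f u * x u ω‖ₑ ^ r ∂P).toReal ^ (2 / r)
      ≤ 2 * (r - 1) * (m * ∑ τ ∈ Finset.range (⌊T⌋₊ + 1), (g τ : ℝ)) *
        (∫ t in Icc 0 T, f t ^ 2) * (P A).toReal ^ (2 / r) := by
  have hr0 : 0 < r := by linarith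
  have hr1 : 0 < r - 1 := by linarith
  have hA0 : MeasurableSet A := h𝓡le 0 _ hA
  set Y : ℝ → Ω → ℝ := fun t => (Icc 0 T).indicator (fun t => A.indicator (x t)) t with hYdef
  have hYt : ∀ t ∈ Icc 0 T, Y t = A.indicator (x t) := fun t ht => by
    simp only [hYdef, indicator_of_mem ht]
  have hY : Measurable (Function.uncurry Y) := by
    have h1 : Measurable fun q : Icc (0 : ℝ) T × Ω => x q.1 q.2 :=
      (hprog T hT).mono (sup_le_sup le_rfl (MeasurableSpace.comap_mono (h𝓡le T))) le_rfl
    have h2 := (measurable_comp_projIcc hT h1).indicator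
      ((measurableSet_Icc (a := (0 : ℝ)) (b := T)).prod hA0)
    convert h2 using 1
    ext ⟨t, ω⟩
    by_cases ht : t ∈ Icc 0 T
    · by_cases hω : ω ∈ A
      · rw [indicator_of_mem (mk_mem_prod ht hω)]
        simp [hYt t ht, hω, projIcc_of_mem hT ht]
      · rw [indicator_of_notMem (fun h => hω h.2)]
        simp [hYt t ht, hω]
    · rw [indicator_of_notMem (fun h => ht h.1)]
      simp [hYdef, ht]
  have hSA : ∀ s ∈ Icc 0 T, ∀ ω, ∫ u in Ioc 0 s, f u * Y u ω
      = A.indicator (fun ω => ∫ u in Ioc 0 s, f u * x u ω) ω := by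
    intro s hs ω
    have h1 : ∀ u ∈ Ioc 0 s, f u * Y u ω = f u * A.indicator (x u) ω := fun u hu => by
      rw [hYt u ⟨hu.1.le, hu.2.trans hs.2⟩]
    rw [setIntegral_congr_fun measurableSet_Ioc h1]
    by_cases hω : ω ∈ A <;> simp [hω]
  -- both constants scale with `c = P(A)^{1/r}`, since the moments are integrals over `A`
  set c : ℝ≥0∞ := P A ^ (1 / r) with hcdef
  have hcr : c ^ r = P A := by
    rw [hcdef, ← ENNReal.rpow_mul, one_div_mul_cancel hr0.ne', ENNReal.rpow_one]
  have hctop : c ≠ ∞ := ENNReal.rpow_ne_top_of_nonneg (by positivity) (measure_ne_top _ _)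
  have hind : ∀ h : Ω → ℝ, ∫⁻ ω, ‖A.indicator h ω‖ₑ ^ r ∂P = ∫⁻ ω in A, ‖h ω‖ₑ ^ r ∂P := by
    intro h
    rw [← lintegral_indicator hA0]
    refine lintegral_congr fun ω => ?_
    by_cases hω : ω ∈ A <;> simp [hω, hr0]
  set G : ℕ → ℝ≥0∞ := fun τ => g τ * c with hGdef
  have hSm : ∀ s, (hs : 0 ≤ s) → s ≤ T →
      StronglyMeasurable[𝓡 s] fun ω => |∫ u in Ioc 0 s, f u * Y u ω| ^ (r - 2) * Y s ω := by
    intro s hs hsT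
    have h1 : Measurable[𝓡 s] fun ω => ∫ u in Ioc 0 s, f u * x u ω :=
      @measurable_integral_of_prog Ω (𝓡 s) x s hs (hprog s hs) f hf
    have h2 : Measurable[𝓡 s] (x s) :=
      (hprog s hs).comp (@measurable_prodMk_left _ _ _ (𝓡 s) (⟨s, hs, le_rfl⟩ : Icc (0 : ℝ) s))
    have hAs : MeasurableSet[𝓡 s] A := h𝓡mono hs _ hA
    have h3 : Measurable[𝓡 s] (A.indicator fun ω => ∫ u in Ioc 0 s, f u * x u ω) :=
      h1.indicator hAs
    have h4 : Measurable[𝓡 s] (A.indicator (x s)) := h2.indicator hAs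
    simp only [hSA s ⟨hs, hsT⟩, hYt s ⟨hs, hsT⟩]
    refine (Measurable.mul ?_ h4).stronglyMeasurable
    exact (measurable_abs.comp h3).pow_const _
  have hYmem : ∀ t ∈ Icc 0 T, MemLp (Y t) (ENNReal.ofReal r) P := fun t ht => by
    rw [hYt t ht]; exact (hmem t ht.1).indicator hA0
  have hpq : (r / (r - 1)).HolderConjugate r := by
    rw [Real.holderConjugate_iff]
    refine ⟨by rw [lt_div_iff₀ hr1]; linarith, ?_⟩
    field_simp; ring
  have hint : ∀ t, 0 ≤ t → Integrable (x t) P := fun t ht =>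
    (hmem t ht).integrable (by rw [ENNReal.one_le_ofReal]; linarith)
  have hcore := core_moment (P := P) hr hT hf hf2 hY (m := m * c)
    (ENNReal.mul_ne_top ENNReal.coe_ne_top hctop)
    (fun t ht => by
      rw [hYt t ht, hind, ENNReal.mul_rpow_of_nonneg _ _ hr0.le, hcr]
      exact hm t ht)
    (k := (Icc 0 T).indicator fun y => G ⌊y⌋₊)
    (((measurable_from_nat (f := G)).comp Nat.measurable_floor).indicator measurableSet_Icc)
    (kernel_integral_le G T)
    (ENNReal.sum_ne_top.2 fun τ _ => ENNReal.mul_ne_top ENNReal.coe_ne_top hctop)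
    (by
      intro t ht s hs hZ
      have hsT : s ≤ T := hs.2.trans ht.2
      have hτ : ((⌊t - s⌋₊ : ℕ) : ℝ) ≤ t - s := Nat.floor_le (by linarith [hs.2])
      -- the lag `⌊t - s⌋` leaves `s ≤ t - ⌊t - s⌋`, so the later σ-field is independent of `𝓡 s`
      have hI : Indep (𝓡 s) (𝓡p (t - (⌊t - s⌋₊ : ℕ))) P :=
        indep_of_indep_of_le_right (h𝓡indep s hs.1.le) (h𝓡panti (by linarith))
      have hc0 : P[Y t | 𝓡 0] =ᵐ[P] 0 := by
        rw [hYt t ht]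
        refine (condExp_indicator (hint t ht.1) hA).trans ?_
        filter_upwards [hcent t ht.1] with ω hω
        by_cases hω' : ω ∈ A <;> simp [hω', hω]
      refine (covariance_bound (h𝓡le s) (h𝓡ple _) (h𝓡mono hs.1.le) hI hpq
        (hSm s hs.1.le hsT) hZ (hYmem t ht) hc0).trans ?_
      refine mul_le_mul_right ?_ _
      have hmemk : t - s ∈ Icc 0 T := ⟨by linarith [hs.2], by linarith [hs.1, ht.2]⟩
      rw [indicator_of_mem hmemk]
      have hAs : MeasurableSet[𝓡p (t - (⌊t - s⌋₊ : ℕ)) ⊔ 𝓡 0] A :=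
        (le_sup_right : 𝓡 0 ≤ 𝓡p (t - (⌊t - s⌋₊ : ℕ)) ⊔ 𝓡 0) _ hA
      have e : (fun ω => Y t ω - (P[Y t | 𝓡p (t - (⌊t - s⌋₊ : ℕ)) ⊔ 𝓡 0]) ω) =ᵐ[P]
          A.indicator fun ω => x t ω - (P[x t | 𝓡p (t - (⌊t - s⌋₊ : ℕ)) ⊔ 𝓡 0]) ω := by
        rw [hYt t ht]
        filter_upwards [condExp_indicator (hint t ht.1) hAs] with ω hω
        rw [hω]
        by_cases hω' : ω ∈ A <;> simp [hω']
      rw [eLpNorm_congr_ae e, eLpNorm_eq_lintegral_rpow_enorm_toReal (by simpa using hr0)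
        ENNReal.ofReal_ne_top, ENNReal.toReal_ofReal hr0.le, hind]
      refine (ENNReal.rpow_le_rpow (hg ⌊t - s⌋₊ t (by linarith [hs.1]) ht.2)
        (by positivity)).trans_eq ?_
      rw [ENNReal.mul_rpow_of_nonneg _ _ (by positivity), ← ENNReal.rpow_mul,
        mul_one_div_cancel hr0.ne', ENNReal.rpow_one])
  have hTT : T ∈ Icc 0 T := ⟨hT, le_rfl⟩
  simp only [hSA T hTT, hind] at hcore
  obtain ⟨h1, h2, h3⟩ := hcore
  refine ⟨?_, h2, h3.trans_eq ?_⟩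
  · filter_upwards [h1] with ω hω hωA
    rw [intervalIntegrable_iff_integrableOn_Ioc_of_le hT] at hω ⊢
    refine hω.congr_fun (fun u hu => ?_) measurableSet_Ioc
    simp [hYt u ⟨hu.1.le, hu.2⟩, hωA]
  · have hc2 : c.toReal * c.toReal = (P A).toReal ^ (2 / r) := by
      rw [← ENNReal.toReal_mul, hcdef, ← ENNReal.rpow_add_of_nonneg _ _ (by positivity)
        (by positivity), ← ENNReal.toReal_rpow]
      congr 1; ring
    rw [← hc2, hGdef, ← Finset.sum_mul, ENNReal.toReal_mul, ENNReal.toReal_mul,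
      ENNReal.toReal_sum (fun τ _ => ENNReal.coe_ne_top)]
    simp only [ENNReal.coe_toReal]
    ring

/-! ### Hulls, bounds for conditional expectations, and Minkowski over coordinates -/

/-- Every set has a hull among the sets of a sub-σ-field: a superset in the sub-σ-field that is
almost surely contained in every other such superset. -/
theorem exists_measurable_hull {Ω : Type*} {m0 : MeasurableSpace Ω} (P : Measure Ω)
    [IsFiniteMeasure P] {𝓖 : MeasurableSpace Ω} (h𝓖 : 𝓖 ≤ m0) (B : Set Ω) :
    ∃ A, MeasurableSet[𝓖] A ∧ B ⊆ A ∧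
      ∀ D, MeasurableSet[𝓖] D → B ⊆ D → ∀ᵐ ω ∂P, ω ∈ A → ω ∈ D := by
  refine ⟨@toMeasurable Ω 𝓖 (P.trim h𝓖) B, @measurableSet_toMeasurable Ω 𝓖 (P.trim h𝓖) B,
    @subset_toMeasurable Ω 𝓖 (P.trim h𝓖) B, fun D hD hBD => ?_⟩
  set A := @toMeasurable Ω 𝓖 (P.trim h𝓖) B with hAdef
  have hA : MeasurableSet[𝓖] A := @measurableSet_toMeasurable Ω 𝓖 (P.trim h𝓖) B
  have hAB : P.trim h𝓖 A = P.trim h𝓖 B := @measure_toMeasurable Ω 𝓖 (P.trim h𝓖) B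
  have h1 : P.trim h𝓖 A ≤ P.trim h𝓖 (A ∩ D) := by
    rw [hAB]
    exact measure_mono (subset_inter (@subset_toMeasurable Ω 𝓖 (P.trim h𝓖) B) hBD)
  rw [trim_measurableSet_eq h𝓖 hA, trim_measurableSet_eq h𝓖 (hA.inter hD)] at h1
  have h2 := measure_inter_add_sdiff (μ := P) A (h𝓖 _ hD)
  have h3 : P (A \ D) = 0 := by
    have h4 : P (A ∩ D) + P (A \ D) ≤ P (A ∩ D) + 0 := by rw [h2, add_zero]; exact h1
    exact le_zero_iff.1 ((ENNReal.add_le_add_iff_left (measure_ne_top _ _)).1 h4)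
  rw [ae_iff]
  refine measure_mono_null (fun ω hω => ?_) h3
  simpa using hω

/-- A bound `E[h 1_{A'}] ≤ c P(A')` for all events `A' ⊆ A` of the σ-field gives
`E[h | 𝓖] ≤ c` on `A`. -/
theorem condExp_le_of_setLIntegral_le {Ω : Type*} {m0 : MeasurableSpace Ω} {P : Measure Ω}
    [IsFiniteMeasure P] {𝓖 : MeasurableSpace Ω} (h𝓖 : 𝓖 ≤ m0) {h : Ω → ℝ} (hh : Integrable h P)
    (h0 : ∀ ω, 0 ≤ h ω) {A : Set Ω} (hA : MeasurableSet[𝓖] A) {c : ℝ} (hc : 0 ≤ c)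
    (hle : ∀ A', MeasurableSet[𝓖] A' → A' ⊆ A →
      ∫⁻ ω in A', ENNReal.ofReal (h ω) ∂P ≤ ENNReal.ofReal c * P A') :
    ∀ᵐ ω ∂P, ω ∈ A → (P[h | 𝓖]) ω ≤ c := by
  set A' := A ∩ {ω | c < (P[h | 𝓖]) ω} with hA'def
  have hA' : MeasurableSet[𝓖] A' :=
    hA.inter (measurableSet_lt measurable_const stronglyMeasurable_condExp.measurable)
  have h1 : ∫ ω in A', (P[h | 𝓖]) ω ∂P ≤ c * (P A').toReal := by
    rw [setIntegral_condExp h𝓖 hh hA', integral_eq_lintegral_of_nonneg_ae (ae_of_all _ h0)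
      hh.aestronglyMeasurable.restrict]
    have := ENNReal.toReal_mono (ENNReal.mul_ne_top ENNReal.ofReal_ne_top (measure_ne_top _ _))
      (hle A' hA' inter_subset_left)
    rwa [ENNReal.toReal_mul, ENNReal.toReal_ofReal hc] at this
  have hint : IntegrableOn (fun ω => (P[h | 𝓖]) ω - c) A' P :=
    (integrable_condExp.sub (integrable_const c)).integrableOn
  have h2 : ∫ ω in A', ((P[h | 𝓖]) ω - c) ∂P ≤ 0 := by
    rw [integral_sub integrable_condExp.integrableOn (integrable_const c).integrableOn,
      setIntegral_const, smul_eq_mul, measureReal_def]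
    linarith
  have hpos : ∀ ω ∈ A', 0 < (P[h | 𝓖]) ω - c := fun ω hω => sub_pos.2 hω.2
  have hnn : 0 ≤ᵐ[P.restrict A'] fun ω => (P[h | 𝓖]) ω - c :=
    (ae_restrict_iff' (h𝓖 _ hA')).2 (ae_of_all _ fun ω hω => (hpos ω hω).le)
  have h3 : P A' = 0 := by
    by_contra hne
    have := (setIntegral_pos_iff_support_of_nonneg_ae hnn hint).2 (by
      refine (pos_iff_ne_zero.2 hne).trans_le (measure_mono fun ω hω => ⟨(hpos ω hω).ne', hω⟩))
    linarith
  rw [ae_iff]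
  refine measure_mono_null (fun ω hω => ?_) h3
  simp only [mem_ofPred_eq, Classical.not_imp, not_le] at hω
  exact hω

theorem setLIntegral_le_of_condExp_le {Ω : Type*} {m0 : MeasurableSpace Ω} {P : Measure Ω}
    [IsFiniteMeasure P] {𝓖 : MeasurableSpace Ω} (h𝓖 : 𝓖 ≤ m0) {h : Ω → ℝ} (hh : Integrable h P)
    (h0 : ∀ ω, 0 ≤ h ω) {A : Set Ω} (hA : MeasurableSet[𝓖] A) {c : ℝ}
    (hle : ∀ᵐ ω ∂P, ω ∈ A → (P[h | 𝓖]) ω ≤ c) :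
    ∫⁻ ω in A, ENNReal.ofReal (h ω) ∂P ≤ ENNReal.ofReal c * P A := by
  rw [← ofReal_integral_eq_lintegral_ofReal hh.integrableOn (ae_of_all _ h0),
    ← setIntegral_condExp h𝓖 hh hA]
  have h1 : ∫ ω in A, (P[h | 𝓖]) ω ∂P ≤ ∫ _ in A, c ∂P :=
    setIntegral_mono_on_ae integrable_condExp.integrableOn (integrable_const c).integrableOn
      (h𝓖 _ hA) hle
  refine (ENNReal.ofReal_le_ofReal h1).trans_eq ?_
  rw [setIntegral_const, smul_eq_mul, measureReal_def, ENNReal.ofReal_mul ENNReal.toReal_nonneg,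
    ENNReal.ofReal_toReal (measure_ne_top _ _), mul_comm]

/-- Square root of the coordinate bound; `2 a b ≤ (a + b)²` turns the product of the moment constant
and the mixing constant into their sum. -/
theorem rpow_inv_le_of_rpow_two_div_le {r I a m G V : ℝ} (hr : 2 ≤ r) (hI : 0 ≤ I) (ha : 0 ≤ a)
    (hm : 0 ≤ m) (hG : 0 ≤ G) (hV : 0 ≤ V)
    (h : I ^ (2 / r) ≤ 2 * (r - 1) * (m * G) * V * a ^ (2 / r)) :
    I ^ (1 / r) ≤ √(r - 1) * √V * (m + G) * a ^ (1 / r) := by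
  have hr0 : 0 < r := by linarith
  have e : ∀ {y : ℝ}, 0 ≤ y → y ^ (2 / r) = (y ^ (1 / r)) ^ 2 := fun {y} hy => by
    rw [← rpow_natCast, ← rpow_mul hy]; congr 1; push_cast; ring
  rw [e hI, e ha] at h
  refine le_of_sq_le_sq ?_ (by positivity)
  refine h.trans ?_
  rw [mul_pow, mul_pow, mul_pow, sq_sqrt (by linarith), sq_sqrt hV]
  refine mul_le_mul_of_nonneg_right ?_ (sq_nonneg _)
  have h2 : 2 * (m * G) ≤ (m + G) ^ 2 := by nlinarith [sq_nonneg m, sq_nonneg G]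
  calc 2 * (r - 1) * (m * G) * V = ((r - 1) * V) * (2 * (m * G)) := by ring
    _ ≤ ((r - 1) * V) * (m + G) ^ 2 :=
      mul_le_mul_of_nonneg_left h2 (mul_nonneg (by linarith) hV)
    _ = _ := by ring

/-- Minkowski's inequality over the coordinates. -/
theorem vector_localized_moment {Ω : Type*} {m0 : MeasurableSpace Ω} {P : Measure Ω}
    [IsProbabilityMeasure P] {d : ℕ} {A : Set Ω} (hA : MeasurableSet A)
    {f : ℝ → ℝ} {X : ℝ → Ω → EuclideanSpace ℝ (Fin d)} {T : ℝ} (hT : 0 ≤ T)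
    {r : ℝ} (hr : 2 ≤ r)
    (hmeas : ∀ i, Measurable fun ω => ∫ u in Ioc 0 T, f u * X u ω i)
    (hint : ∀ i, ∀ᵐ ω ∂P, ω ∈ A → IntervalIntegrable (fun u => f u * X u ω i) volume 0 T)
    {b : Fin d → ℝ} (hb : ∀ i, 0 ≤ b i)
    (hfin : ∀ i, ∫⁻ ω in A, ‖∫ u in Ioc 0 T, f u * X u ω i‖ₑ ^ r ∂P ≠ ∞)
    (hle : ∀ i, (∫⁻ ω in A, ‖∫ u in Ioc 0 T, f u * X u ω i‖ₑ ^ r ∂P).toReal ^ (1 / r)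
      ≤ b i * (P A).toReal ^ (1 / r)) :
    ∫⁻ ω in A, ‖∫ u in Icc 0 T, f u • X u ω‖ₑ ^ r ∂P
      ≤ ENNReal.ofReal ((∑ i, b i) ^ r) * P A := by
  have hr0 : 0 < r := by linarith
  have hcoord : ∀ᵐ ω ∂(P.restrict A), ‖∫ u in Icc 0 T, f u • X u ω‖
      ≤ ‖(∑ i, fun ω => |∫ u in Ioc 0 T, f u * X u ω i|) ω‖ := by
    rw [ae_restrict_iff' hA]
    filter_upwards [ae_all_iff.2 hint] with ω hω hωA
    rw [integral_Icc_eq_integral_Ioc]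
    have hint' : ∀ i, Integrable (fun u => (f u • X u ω) i) (volume.restrict (Ioc 0 T)) :=
      fun i => ((intervalIntegrable_iff_integrableOn_Ioc_of_le hT).1 (hω i hωA)).congr
        (ae_of_all _ fun u => by simp)
    have h1 : ∀ i, (∫ u in Ioc 0 T, f u • X u ω) i = ∫ u in Ioc 0 T, f u * X u ω i := by
      intro i
      rw [eval_integral_piLp hint']
      simp
    rw [Finset.sum_apply, norm_of_nonneg (Finset.sum_nonneg fun _ _ => abs_nonneg _),
      EuclideanSpace.norm_eq]
    refine Real.sqrt_le_iff.2 ⟨Finset.sum_nonneg fun _ _ => abs_nonneg _, ?_⟩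
    simp only [h1, norm_eq_abs]
    exact Finset.sum_sq_le_sq_sum_of_nonneg fun _ _ => abs_nonneg _
  have hnorm : ∀ h : Ω → ℝ, eLpNorm h (ENNReal.ofReal r) (P.restrict A)
      = (∫⁻ ω in A, ‖h ω‖ₑ ^ r ∂P) ^ (1 / r) := fun h => by
    rw [eLpNorm_eq_lintegral_rpow_enorm_toReal (by simpa using hr0) ENNReal.ofReal_ne_top,
      ENNReal.toReal_ofReal hr0.le]
  set c : ℝ≥0∞ := P A ^ (1 / r) with hcdef
  have hbi : ∀ i, eLpNorm (fun ω => |∫ u in Ioc 0 T, f u * X u ω i|) (ENNReal.ofReal r)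
      (P.restrict A) ≤ ENNReal.ofReal (b i) * c := by
    intro i
    rw [hnorm]
    simp only [enorm_abs]
    have h1 := ENNReal.ofReal_le_ofReal (hle i)
    rw [← ENNReal.ofReal_rpow_of_nonneg ENNReal.toReal_nonneg (by positivity),
      ENNReal.ofReal_toReal (hfin i), ENNReal.ofReal_mul (hb i),
      ← ENNReal.ofReal_rpow_of_nonneg ENNReal.toReal_nonneg (by positivity),
      ENNReal.ofReal_toReal (measure_ne_top _ _)] at h1
    exact h1
  have hsum : eLpNorm (∑ i, fun ω => |∫ u in Ioc 0 T, f u * X u ω i|) (ENNReal.ofReal r)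
      (P.restrict A) ≤ ENNReal.ofReal (∑ i, b i) * c := by
    refine (eLpNorm_sum_le (fun i _ => ((hmeas i).abs).aestronglyMeasurable)
      (by rw [ENNReal.one_le_ofReal]; linarith)).trans ?_
    rw [ENNReal.ofReal_sum_of_nonneg fun i _ => hb i, Finset.sum_mul]
    exact Finset.sum_le_sum fun i _ => hbi i
  calc ∫⁻ ω in A, ‖∫ u in Icc 0 T, f u • X u ω‖ₑ ^ r ∂P
      ≤ ∫⁻ ω in A, ‖(∑ i, fun ω => |∫ u in Ioc 0 T, f u * X u ω i|) ω‖ₑ ^ r ∂P := by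
        refine lintegral_mono_ae ?_
        filter_upwards [hcoord] with ω hω
        exact ENNReal.rpow_le_rpow (enorm_le_iff_norm_le.2 hω) hr0.le
    _ = (eLpNorm (∑ i, fun ω => |∫ u in Ioc 0 T, f u * X u ω i|) (ENNReal.ofReal r)
          (P.restrict A)) ^ r := by
        rw [hnorm, ← ENNReal.rpow_mul, one_div_mul_cancel hr0.ne', ENNReal.rpow_one]
    _ ≤ (ENNReal.ofReal (∑ i, b i) * c) ^ r := ENNReal.rpow_le_rpow hsum hr0.le
    _ = _ := by
        rw [ENNReal.mul_rpow_of_nonneg _ _ hr0.le, hcdef, ← ENNReal.rpow_mul,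
          one_div_mul_cancel hr0.ne', ENNReal.rpow_one,
          ENNReal.ofReal_rpow_of_nonneg (Finset.sum_nonneg fun i _ => hb i) hr0.le]

/-! ### The conditional inequality with deterministic constants -/

/-- The conditional inequality on an `𝓡₀`-event on which the conditional moment and mixing terms
have deterministic bounds. -/
theorem conditional_moment_on {Ω : Type*} {m0 : MeasurableSpace Ω} {P : Measure Ω}
    [IsProbabilityMeasure P] {d : ℕ} {𝓡 𝓡p : ℝ → MeasurableSpace Ω}
    (h𝓡mono : Monotone 𝓡) (h𝓡le : ∀ t, 𝓡 t ≤ m0)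
    (h𝓡panti : Antitone 𝓡p) (h𝓡ple : ∀ t, 𝓡p t ≤ m0)
    (h𝓡indep : ∀ t : ℝ, 0 ≤ t → Indep (𝓡 t) (𝓡p t) P)
    {X : ℝ → Ω → EuclideanSpace ℝ (Fin d)}
    (hprog : ∀ t : ℝ, 0 ≤ t →
      @Measurable (Icc (0 : ℝ) t × Ω) (EuclideanSpace ℝ (Fin d))
        (@Prod.instMeasurableSpace _ _ _ (𝓡 t)) _ (fun q => X (q.1 : ℝ) q.2))
    {r : ℝ} (hr : 2 ≤ r) (hXLr : ∀ t : ℝ, 0 ≤ t → Integrable (fun ω => ‖X t ω‖ ^ r) P)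
    (hcentered : ∀ t : ℝ, 0 ≤ t → (P[X t | 𝓡 0]) =ᵐ[P] 0)
    {T : ℝ} (hT : 0 ≤ T) {f : ℝ → ℝ} (hf : Measurable f)
    (hf2 : IntegrableOn (fun t => f t ^ 2) (Icc 0 T))
    (hS : Integrable (fun ω => ‖∫ t in Icc (0 : ℝ) T, f t • X t ω‖ ^ r) P)
    {A : Set Ω} (hA : MeasurableSet[𝓡 0] A) {m : Fin d → ℝ≥0} {g : Fin d → ℕ → ℝ≥0}
    (hm : ∀ i t, 0 ≤ t → ∀ᵐ ω ∂P, ω ∈ A → MrTermC P 𝓡 r X i t ω ≤ m i)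
    (hg : ∀ i (τ : ℕ) (t : ℝ), (τ : ℝ) ≤ t → t ≤ T →
      ∀ᵐ ω ∂P, ω ∈ A → GrTermC P 𝓡 𝓡p r X i τ t ω ≤ g i τ) :
    ∀ᵐ ω ∂P, ω ∈ A →
      ((P[fun ω' => ‖∫ t in Icc (0 : ℝ) T, f t • X t ω'‖ ^ r | 𝓡 0]) ω) ^ r⁻¹
        ≤ √(r - 1) * √(∫ t in Icc (0 : ℝ) T, f t ^ 2) *
          ∑ i, ((m i : ℝ) + ∑ τ ∈ Finset.range (⌊T⌋₊ + 1), (g i τ : ℝ)) := by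
  have hr0 : 0 < r := by linarith
  have hr1 : 1 ≤ ENNReal.ofReal r := by rw [ENNReal.one_le_ofReal]; linarith
  have hXmeas : ∀ t, 0 ≤ t → Measurable (X t) := fun t ht =>
    ((hprog t ht).comp
      (@measurable_prodMk_left _ _ _ (𝓡 t) (⟨t, ht, le_rfl⟩ : Icc (0 : ℝ) t))).mono
      (h𝓡le t) le_rfl
  have hXmem : ∀ t, 0 ≤ t → MemLp (X t) (ENNReal.ofReal r) P := fun t ht => by
    rw [← integrable_norm_rpow_iff (hXmeas t ht).aestronglyMeasurable (by simpa using hr0)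
      ENNReal.ofReal_ne_top, ENNReal.toReal_ofReal hr0.le]
    exact hXLr t ht
  have hmem : ∀ i t, 0 ≤ t → MemLp (fun ω => X t ω i) (ENNReal.ofReal r) P := fun i t ht =>
    (hXmem t ht).eval_piLp i
  have hcent : ∀ i t, 0 ≤ t → P[fun ω => X t ω i | 𝓡 0] =ᵐ[P] 0 := by
    intro i t ht
    have h1 := ContinuousLinearMap.comp_condExp_comm (m := 𝓡 0)
      ((hXmem t ht).integrable hr1) (EuclideanSpace.proj (𝕜 := ℝ) i)
    filter_upwards [h1, hcentered t ht] with ω h2 h3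
    simp only [Function.comp_def, h3] at h2
    simpa using h2.symm
  have hprogi : ∀ i, ∀ t : ℝ, 0 ≤ t →
      @Measurable (Icc (0 : ℝ) t × Ω) ℝ
        (@Prod.instMeasurableSpace _ _ _ (𝓡 t)) _ (fun q => X (q.1 : ℝ) q.2 i) := fun i t ht =>
    (EuclideanSpace.proj (𝕜 := ℝ) i).continuous.measurable.comp (hprog t ht)
  have hmeasI : ∀ i, Measurable fun ω => ∫ u in Ioc 0 T, f u * X u ω i := fun i =>
    (@measurable_integral_of_prog Ω (𝓡 T) (fun t ω => X t ω i) T hT (hprogi i T hT) f hf).mono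
      (h𝓡le T) le_rfl
  set V := ∫ t in Icc (0 : ℝ) T, f t ^ 2 with hVdef
  have hV : 0 ≤ V := integral_nonneg fun _ => sq_nonneg _
  set b : Fin d → ℝ := fun i =>
    √(r - 1) * √V * ((m i : ℝ) + ∑ τ ∈ Finset.range (⌊T⌋₊ + 1), (g i τ : ℝ)) with hbdef
  have hb : ∀ i, 0 ≤ b i := fun i => by positivity
  have hsum : √(r - 1) * √V * ∑ i, ((m i : ℝ) + ∑ τ ∈ Finset.range (⌊T⌋₊ + 1), (g i τ : ℝ))
      = ∑ i, b i := by rw [Finset.mul_sum]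
  rw [hsum]
  have hb0 : 0 ≤ ∑ i, b i := Finset.sum_nonneg fun i _ => hb i
  -- transfer a conditional bound to all smaller events of the initial σ-field
  have htrans : ∀ (h : Ω → ℝ) (c : ℝ≥0) (A' : Set Ω), MeasurableSet[𝓡 0] A' → A' ⊆ A →
      MemLp h (ENNReal.ofReal r) P →
      (∀ᵐ ω ∂P, ω ∈ A → ((P[fun ω => |h ω| ^ r | 𝓡 0]) ω) ^ r⁻¹ ≤ c) →
      ∫⁻ ω in A', ‖h ω‖ₑ ^ r ∂P ≤ (c : ℝ≥0∞) ^ r * P A' := by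
    intro h c A' hA' hsub hh hle
    have hi : Integrable (fun ω => |h ω| ^ r) P := by
      have := hh.integrable_norm_rpow (by simpa using hr0) ENNReal.ofReal_ne_top
      rwa [ENNReal.toReal_ofReal hr0.le] at this
    have h0 : ∀ ω, 0 ≤ |h ω| ^ r := fun ω => by positivity
    have h1 := setLIntegral_le_of_condExp_le (h𝓡le 0) hi h0 hA' (c := (c : ℝ) ^ r) (by
      filter_upwards [hle, condExp_nonneg (m := 𝓡 0) (ae_of_all P h0)] with ω h1 h2 h3
      exact (rpow_inv_le_iff_of_pos h2 c.2 hr0).1 (h1 (hsub h3)))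
    rw [← ENNReal.ofReal_rpow_of_nonneg c.coe_nonneg hr0.le, ENNReal.ofReal_coe_nnreal] at h1
    refine le_trans (le_of_eq ?_) h1
    refine lintegral_congr fun ω => ?_
    rw [← ENNReal.ofReal_rpow_of_nonneg (abs_nonneg _) hr0.le, ← norm_eq_abs, ofReal_norm]
  have hbound := condExp_le_of_setLIntegral_le (h𝓡le 0) hS (fun ω => by positivity) hA
    (c := (∑ i, b i) ^ r) (by positivity) (by
      intro A' hA' hsub
      have hloc : ∀ i, _ := fun i => localized_moment h𝓡mono h𝓡le h𝓡panti h𝓡ple h𝓡indep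
        (x := fun t ω => X t ω i) (hprogi i) hr (hmem i) (hcent i) hT hf hf2 hA' (m := m i)
        (fun t ht => htrans _ _ A' hA' hsub (hmem i t ht.1) (hm i t ht.1)) (g := g i)
        (fun τ t hτ ht => htrans _ _ A' hA' hsub
          ((hmem i t ((Nat.cast_nonneg τ).trans hτ)).sub
            ((hmem i t ((Nat.cast_nonneg τ).trans hτ)).condExp hr1)) (hg i τ t hτ ht))
      have h1 := vector_localized_moment (P := P) (h𝓡le 0 _ hA') hT hr hmeasI
        (fun i => (hloc i).1) hb (fun i => (hloc i).2.1)
        (fun i => rpow_inv_le_of_rpow_two_div_le hr ENNReal.toReal_nonneg ENNReal.toReal_nonneg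
          (m i).2 (by positivity) hV (hloc i).2.2)
      refine le_trans (le_of_eq ?_) h1
      refine lintegral_congr fun ω => ?_
      rw [← ENNReal.ofReal_rpow_of_nonneg (norm_nonneg _) hr0.le, ofReal_norm])
  have hnn : 0 ≤ᵐ[P] P[fun ω' => ‖∫ t in Icc (0 : ℝ) T, f t • X t ω'‖ ^ r | 𝓡 0] :=
    condExp_nonneg (ae_of_all P fun ω => by positivity)
  filter_upwards [hbound, hnn] with ω h1 h2 h3
  exact (rpow_inv_le_iff_of_pos h2 hb0 hr0).2 (h1 h3)

theorem exists_nnrat_mem_Ioo {a ε : ℝ} (ha : 0 ≤ a) (hε : 0 < ε) :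
    ∃ q : ℚ≥0, a ≤ (q : ℝ) ∧ (q : ℝ) ≤ a + ε := by
  obtain ⟨q, h1, h2⟩ := exists_rat_btwn (lt_add_of_pos_right a hε)
  have hq : 0 ≤ q := by exact_mod_cast ha.trans h1.le
  exact ⟨⟨q, hq⟩, h1.le, h2.le⟩

end Helpers

/-- conditional moment inequality for weighted integrals of a centered,
`L^r`-bounded progressively measurable process (`r ≥ 2`) with a.s. finite mixing
quantities: a.s. `E[|∫₀^T f_t X_t dt|^r | 𝓡₀]^{1/r} ≤ √(r−1) (∫₀^T f_t² dt)^{1/2} [M_r + Γ_r]`. -/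
theorem cts_weighted_integral_moment_bound
    {Ω : Type*} {m0 : MeasurableSpace Ω} (P : Measure Ω) [IsProbabilityMeasure P]
    (d : ℕ) (hd : 1 ≤ d)
    (𝓡 𝓡p : ℝ → MeasurableSpace Ω)
    (h𝓡mono : Monotone 𝓡) (h𝓡le : ∀ t, 𝓡 t ≤ m0)
    (h𝓡panti : Antitone 𝓡p) (h𝓡ple : ∀ t, 𝓡p t ≤ m0)
    (h𝓡indep : ∀ t : ℝ, 0 ≤ t → Indep (𝓡 t) (𝓡p t) P)
    (X : ℝ → Ω → EuclideanSpace ℝ (Fin d))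
    (hprog : ∀ t : ℝ, 0 ≤ t →
      @Measurable (Set.Icc (0 : ℝ) t × Ω) (EuclideanSpace ℝ (Fin d))
        (@Prod.instMeasurableSpace _ _ _ (𝓡 t)) _ (fun q => X (q.1 : ℝ) q.2))
    (r : ℝ) (hr : 2 ≤ r)
    (hXLr : ∀ t : ℝ, 0 ≤ t → Integrable (fun ω => ‖X t ω‖ ^ r) P)
    (hXbdd : ∃ C : ℝ, ∀ t : ℝ, 0 ≤ t → ∫ ω, ‖X t ω‖ ^ r ∂P ≤ C)
    (hcentered : ∀ t : ℝ, 0 ≤ t → (P[X t | 𝓡 0]) =ᵐ[P] 0)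
    (hfin : ∀ᵐ ω ∂P,
      (∀ i : Fin d, BddAbove (Set.range fun t : {t : ℝ // 0 ≤ t} =>
        MrTermC P 𝓡 r X i (t : ℝ) ω)) ∧
      (∀ (i : Fin d) (τ : ℕ), BddAbove (Set.range fun t : {t : ℝ // (τ : ℝ) ≤ t} =>
        GrTermC P 𝓡 𝓡p r X i τ (t : ℝ) ω)) ∧
      (∀ i : Fin d, Summable fun τ : ℕ =>
        ⨆ t : {t : ℝ // (τ : ℝ) ≤ t}, GrTermC P 𝓡 𝓡p r X i τ (t : ℝ) ω))
    (T : ℝ) (hT : 0 ≤ T)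
    (f : ℝ → ℝ) (hfmeas : Measurable f)
    (hf2 : IntegrableOn (fun t => (f t) ^ 2) (Set.Icc 0 T) volume) :
    ∀ᵐ ω ∂P,
      ((P[fun ω' => ‖∫ t in Set.Icc (0 : ℝ) T, f t • X t ω'‖ ^ r | 𝓡 0]) ω) ^ r⁻¹
        ≤ Real.sqrt (r - 1) * Real.sqrt (∫ t in Set.Icc (0 : ℝ) T, (f t) ^ 2) *
          (MrC P 𝓡 r X ω + GrC P 𝓡 𝓡p r X ω) := by
  have hr0 : 0 < r := by linarith
  set N := ⌊T⌋₊ + 1 with hNdef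
  set c := √(r - 1) * √(∫ t in Set.Icc (0 : ℝ) T, f t ^ 2) with hcdef
  have hc : 0 ≤ c := by positivity
  have hMnn : ∀ᵐ ω ∂P, ∀ i, 0 ≤ MrTermC P 𝓡 r X i 0 ω := by
    refine ae_all_iff.2 fun i => ?_
    filter_upwards [condExp_nonneg (m := 𝓡 0) (μ := P) (f := fun ω => |X 0 ω i| ^ r)
      (ae_of_all _ fun ω => by positivity)] with ω hω
    exact rpow_nonneg hω _
  have hGnn : ∀ᵐ ω ∂P, ∀ i, ∀ τ : ℕ, 0 ≤ GrTermC P 𝓡 𝓡p r X i τ τ ω := by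
    refine ae_all_iff.2 fun i => ae_all_iff.2 fun τ => ?_
    filter_upwards [condExp_nonneg (m := 𝓡 0) (μ := P) (f := fun ω' => |X τ ω' i -
      (P[fun ω'' => X τ ω'' i | 𝓡p ((τ : ℝ) - τ) ⊔ 𝓡 0]) ω'| ^ r)
      (ae_of_all _ fun ω => by positivity)] with ω hω
    exact rpow_nonneg hω _
  have hcast : ∀ q : ℚ≥0, ((q : NNReal) : ℝ) = (q : ℝ) := fun q => rfl
  -- the inequality with rational constants dominating the essential suprema
  have hrat : ∀ (q : Fin d → ℚ≥0) (h : Fin d → Fin N → ℚ≥0), ∀ᵐ ω ∂P,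
      (∀ i, ∀ t : ℝ, 0 ≤ t → MrTermC P 𝓡 r X i t ω ≤ q i) →
      (∀ i, ∀ τ : Fin N, ∀ t : ℝ, ((τ : ℕ) : ℝ) ≤ t → GrTermC P 𝓡 𝓡p r X i τ t ω ≤ h i τ) →
      ((P[fun ω' => ‖∫ t in Set.Icc (0 : ℝ) T, f t • X t ω'‖ ^ r | 𝓡 0]) ω) ^ r⁻¹
        ≤ c * ∑ i, ((q i : ℝ) + ∑ τ, (h i τ : ℝ)) := by
    intro q h
    by_cases hS : Integrable (fun ω => ‖∫ t in Set.Icc (0 : ℝ) T, f t • X t ω‖ ^ r) P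
    swap
    -- the conditional expectation of a non-integrable function is `0` by convention
    · refine ae_of_all _ fun ω _ _ => ?_
      rw [condExp_of_not_integrable hS, Pi.zero_apply, zero_rpow (inv_ne_zero hr0.ne')]
      positivity
    obtain ⟨A, hA, hBA, hhull⟩ := exists_measurable_hull P (h𝓡le 0) {ω |
      (∀ i, ∀ t : ℝ, 0 ≤ t → MrTermC P 𝓡 r X i t ω ≤ q i) ∧
      (∀ i, ∀ τ : Fin N, ∀ t : ℝ, ((τ : ℕ) : ℝ) ≤ t → GrTermC P 𝓡 𝓡p r X i τ t ω ≤ h i τ)}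
    have hτN : ∀ {τ : ℕ} {t : ℝ}, (τ : ℝ) ≤ t → t ≤ T → τ < N := fun h1 h2 =>
      Nat.lt_succ_of_le (Nat.le_floor (h1.trans h2))
    have hmain := conditional_moment_on h𝓡mono h𝓡le h𝓡panti h𝓡ple h𝓡indep hprog hr hXLr
      hcentered hT hfmeas hf2 hS hA (m := fun i => (q i : NNReal))
      (g := fun i τ => if hτ : τ < N then (h i ⟨τ, hτ⟩ : NNReal) else 0)
      (fun i t ht => by
        refine (hhull {ω | MrTermC P 𝓡 r X i t ω ≤ q i} ?_ fun ω hω => hω.1 i t ht).mono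
          fun ω hω hωA => (hω hωA).trans_eq (hcast _).symm
        exact measurableSet_le (stronglyMeasurable_condExp.measurable.pow_const _)
          measurable_const)
      (fun i τ t hτ ht => by
        have hlt := hτN hτ ht
        refine (hhull {ω | GrTermC P 𝓡 𝓡p r X i τ t ω ≤ h i ⟨τ, hlt⟩} ?_
          fun ω hω => hω.2 i ⟨τ, hlt⟩ t hτ).mono fun ω hω hωA => by
            rw [dif_pos hlt, hcast]; exact hω hωA
        exact measurableSet_le (stronglyMeasurable_condExp.measurable.pow_const _)
          measurable_const)
    filter_upwards [hmain] with ω hω h1 h2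
    refine (hω (hBA ⟨h1, h2⟩)).trans_eq ?_
    congr 1
    refine Finset.sum_congr rfl fun i _ => ?_
    rw [Finset.sum_range, hcast]
    refine congrArg _ (Finset.sum_congr rfl fun τ _ => ?_)
    rw [dif_pos (show (τ : ℕ) < N from τ.2), hcast]
  filter_upwards [hfin, hMnn, hGnn, ae_all_iff.2 fun q => ae_all_iff.2 fun h => hrat q h]
    with ω hω hM0 hG0 hall
  obtain ⟨hbM, hbG, hsumm⟩ := hω
  set M : Fin d → ℝ := fun i => ⨆ t : {t : ℝ // 0 ≤ t}, MrTermC P 𝓡 r X i (t : ℝ) ω with hMdef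
  set γ : Fin d → ℕ → ℝ := fun i τ =>
    ⨆ t : {t : ℝ // (τ : ℝ) ≤ t}, GrTermC P 𝓡 𝓡p r X i τ (t : ℝ) ω with hγdef
  have hMt : ∀ i, ∀ t : ℝ, 0 ≤ t → MrTermC P 𝓡 r X i t ω ≤ M i := fun i t ht =>
    le_ciSup (hbM i) ⟨t, ht⟩
  have hγt : ∀ i, ∀ τ : ℕ, ∀ t : ℝ, (τ : ℝ) ≤ t → GrTermC P 𝓡 𝓡p r X i τ t ω ≤ γ i τ :=
    fun i τ t ht => le_ciSup (hbG i τ) ⟨t, ht⟩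
  have hM : ∀ i, 0 ≤ M i := fun i => (hM0 i).trans (hMt i 0 le_rfl)
  have hγ : ∀ i τ, 0 ≤ γ i τ := fun i τ => (hG0 i τ).trans (hγt i τ τ le_rfl)
  have hR : ∑ i, (M i + ∑ τ : Fin N, γ i τ) ≤ MrC P 𝓡 r X ω + GrC P 𝓡 𝓡p r X ω := by
    rw [Finset.sum_add_distrib]
    refine add_le_add le_rfl (Finset.sum_le_sum fun i _ => ?_)
    rw [← Finset.sum_range fun τ => γ i τ]
    exact (hsumm i).sum_le_tsum _ fun τ _ => hγ i τ
  refine le_trans ?_ (mul_le_mul_of_nonneg_left hR hc)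
  -- rational constants within `ε` of the suprema; there are `d (1 + N)` of them, so the total error
  -- is at most `κ ε ≤ δ`
  refine le_of_forall_pos_le_add fun δ hδ => ?_
  set κ : ℝ := c * (d * (1 + N)) with hκdef
  have hκ : 0 ≤ κ := by positivity
  set ε := δ / (κ + 1) with hεdef
  have hε : 0 < ε := by positivity
  choose q hq1 hq2 using fun i => exists_nnrat_mem_Ioo (hM i) hε
  choose h hh1 hh2 using fun i (τ : Fin N) => exists_nnrat_mem_Ioo (hγ i τ) hε
  refine (hall q h (fun i t ht => (hMt i t ht).trans (hq1 i))
    (fun i τ t ht => (hγt i τ t ht).trans (hh1 i τ))).trans ?_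
  have h1 : ∑ i, ((q i : ℝ) + ∑ τ, (h i τ : ℝ))
      ≤ ∑ i, ((M i + ε) + ∑ τ : Fin N, (γ i τ + ε)) :=
    Finset.sum_le_sum fun i _ => add_le_add (hq2 i) (Finset.sum_le_sum fun τ _ => hh2 i τ)
  have h2 : ∑ i, ((M i + ε) + ∑ τ : Fin N, (γ i τ + ε))
      = ∑ i, (M i + ∑ τ : Fin N, γ i τ) + d * (1 + N) * ε := by
    simp only [Finset.sum_add_distrib, Finset.sum_const, Finset.card_univ, Fintype.card_fin,
      nsmul_eq_mul]
    ring
  have h3 : κ * ε ≤ δ := by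
    rw [hεdef, mul_div_assoc', div_le_iff₀ (by positivity)]
    nlinarith
  calc c * ∑ i, ((q i : ℝ) + ∑ τ, (h i τ : ℝ))
      ≤ c * (∑ i, (M i + ∑ τ : Fin N, γ i τ) + d * (1 + N) * ε) :=
        mul_le_mul_of_nonneg_left (h1.trans_eq h2) hc
    _ = c * ∑ i, (M i + ∑ τ : Fin N, γ i τ) + κ * ε := by rw [hκdef]; ring
    _ ≤ _ := by gcongr
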